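/- Let A = ℚ[x]/(x^{n+1}) be a truncated polynomial algebra. Then the cyclic homology HC_k(A) over ℚ vanishes for infinitely many degrees of one parity; in particular, the reduced cyclic homology of A relative to ℚ is concentrated in even degrees. -/

import Mathlib

noncomputable section

/- STATEMENT 12: For the truncated polynomial algebra A = ℚ[x]/(x^{n+1}), the
cyclic homology HC_k(A) over ℚ vanishes for infinitely many degrees of one
parity; in particular, the reduced cyclic homology of A relative to ℚ is
concentrated in even degrees.

Since A = ℚ ⊕ Ā as algebras, where Ā = span(x, …, xⁿ) is the (nonunital)
augmentation ideal, the reduced cyclic homology of A relative to ℚ is the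
cyclic homology of the nonunital algebra Ā, computed by the Tsygan bicomplex
built from b, b', the cyclic operator t and the norm N.  We realize
Ā^{⊗(q+1)} concretely on the monomial basis: a basis element of `Ch n q` is a
tuple a : Fin (q+1) → Fin n of exponent indices, encoding
x^{a₀+1} ⊗ ⋯ ⊗ x^{a_q+1} (all exponents between 1 and n), and products
truncate: x^i · x^j = 0 once i + j > n. -/

/-- Chains: Ā^{⊗(q+1)} on the monomial basis, Ā = span(x¹,…,xⁿ) ⊂ ℚ[x]/(x^{n+1}). -/
def Ch (n q : ℕ) : Type := ((Fin (q + 1) → Fin n) →₀ ℚ)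

instance (n q : ℕ) : AddCommGroup (Ch n q) :=
  inferInstanceAs (AddCommGroup ((Fin (q + 1) → Fin n) →₀ ℚ))
instance (n q : ℕ) : Module ℚ (Ch n q) :=
  inferInstanceAs (Module ℚ ((Fin (q + 1) → Fin n) →₀ ℚ))

/-- Transport along an equality of degrees. -/
def ccast {n : ℕ} {q q' : ℕ} (h : q = q') : Ch n q ≃ₗ[ℚ] Ch n q' :=
  h ▸ LinearEquiv.refl ℚ (Ch n q)

/-- The basis vector obtained by multiplying the i-th and (i+1)-st tensor
factors of a (zero if the product truncates to zero). -/
def merge {n q : ℕ} (a : Fin (q + 2) → Fin n) (i : Fin (q + 1)) : Ch n q :=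
  if h : (a i.castSucc : ℕ) + (a i.succ : ℕ) + 1 < n then
    Finsupp.single
      (fun j : Fin (q + 1) =>
        if (j : ℕ) < (i : ℕ) then a j.castSucc
        else if (j : ℕ) = (i : ℕ) then ⟨(a i.castSucc : ℕ) + (a i.succ : ℕ) + 1, h⟩
        else a j.succ)
      (1 : ℚ)
  else 0

/-- As `merge`, multiplying the last factor into the first (for the cyclic
term of the Hochschild boundary b). -/
def mergeLast {n q : ℕ} (a : Fin (q + 2) → Fin n) : Ch n q :=
  if h : (a (Fin.last (q + 1)) : ℕ) + (a 0 : ℕ) + 1 < n then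
    Finsupp.single
      (fun j : Fin (q + 1) =>
        if (j : ℕ) = 0 then ⟨(a (Fin.last (q + 1)) : ℕ) + (a 0 : ℕ) + 1, h⟩
        else a j.castSucc)
      (1 : ℚ)
  else 0

/-- The bar boundary b'. -/
def bbar (n q : ℕ) : Ch n (q + 1) →ₗ[ℚ] Ch n q :=
  Finsupp.linearCombination ℚ fun a : Fin (q + 2) → Fin n =>
    ∑ i : Fin (q + 1), ((-1 : ℚ) ^ (i : ℕ)) • merge a i

/-- The Hochschild boundary b. -/
def bH (n q : ℕ) : Ch n (q + 1) →ₗ[ℚ] Ch n q :=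
  Finsupp.linearCombination ℚ fun a : Fin (q + 2) → Fin n =>
    (∑ i : Fin (q + 1), ((-1 : ℚ) ^ (i : ℕ)) • merge a i)
      + ((-1 : ℚ) ^ (q + 1)) • mergeLast a

/-- The cyclic operator t. -/
def tOp (n q : ℕ) : Ch n q →ₗ[ℚ] Ch n q :=
  Finsupp.linearCombination ℚ fun a : Fin (q + 1) → Fin n =>
    ((-1 : ℚ) ^ q) • Finsupp.single (fun j : Fin (q + 1) => a (j - 1)) (1 : ℚ)

/-- The norm operator N = 1 + t + ⋯ + t^q. -/
def nOp (n q : ℕ) : Ch n q →ₗ[ℚ] Ch n q :=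
  ∑ i ∈ Finset.range (q + 1), (tOp n q) ^ i

/-- Total complex of the (first-quadrant) Tsygan bicomplex, X_{p,q} = Ā^{⊗(q+1)},
in total degree m. -/
def TotT (n m : ℕ) : Type := ∀ p : Fin (m + 1), Ch n (m - p)

instance (n m : ℕ) : AddCommGroup (TotT n m) := Pi.addCommGroup
instance (n m : ℕ) : Module ℚ (TotT n m) := Pi.module _ _ _

/-- The total differential TotT n (m+1) → TotT n m of the Tsygan bicomplex:
columns carry b (p even) resp. -b' (p odd); rows carry 1 - t (out of odd
columns) and N (out of even columns). -/
def DT (n m : ℕ) : TotT n (m + 1) →ₗ[ℚ] TotT n m :=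
  LinearMap.pi fun p : Fin (m + 1) =>
    ((if Even (p : ℕ) then bH n (m - (p : ℕ)) else -(bbar n (m - (p : ℕ))))
      ∘ₗ (ccast (show m + 1 - (p : ℕ) = (m - (p : ℕ)) + 1 by
            have := p.isLt; omega)).toLinearMap
      ∘ₗ LinearMap.proj (⟨(p : ℕ), by have := p.isLt; omega⟩ : Fin (m + 2)))
    + ((if Even ((p : ℕ) + 1) then nOp n (m - (p : ℕ))
          else LinearMap.id - tOp n (m - (p : ℕ)))
      ∘ₗ (ccast (show m + 1 - ((p : ℕ) + 1) = m - (p : ℕ) by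
            have := p.isLt; omega)).toLinearMap
      ∘ₗ LinearMap.proj (⟨(p : ℕ) + 1, by have := p.isLt; omega⟩ : Fin (m + 2)))

/-- Homology of composable maps f : M → N, g : N → P: ker g / im f. -/
def hmlgy {M N P : Type} [AddCommGroup M] [Module ℚ M] [AddCommGroup N]
    [Module ℚ N] [AddCommGroup P] [Module ℚ P]
    (f : M →ₗ[ℚ] N) (g : N →ₗ[ℚ] P) : Type :=
  LinearMap.ker g ⧸ Submodule.comap (LinearMap.ker g).subtype (LinearMap.range f)

/-- The reduced cyclic homology of ℚ[x]/(x^{n+1}) in odd degree 2m+1: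
homology of the total Tsygan complex at total degree 2m+1. -/
def HCodd (n m : ℕ) : Type := hmlgy (DT n (2 * m + 1)) (DT n (2 * m))

/-!
Split the chains by weight, the total degree in `x`. By periodicity of the bar complex, its homology
is concentrated in weight `(n + 1) k + 1` in degree `2k`, where it is spanned by the class of
`x ⊗ x ^ n ⊗ x ⊗ ⋯ ⊗ x`, and in weight `(n + 1)(k + 1)` in degree `2k + 1`. Filtering by the
exponent of the first factor, one deduces that Hochschild homology vanishes in degree `2k + 1` above
the critical weight `(n + 1)(k + 1)` and in degree `2k + 2` below it, while in the critical weight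
every cycle of degree `2k + 1` is homologous to a multiple of `α = x ^ n ⊗ x ⊗ x ^ n ⊗ ⋯ ⊗ x`.
Moreover `(1 - t) α` is homologous to `(n + 1) α`, the factor being detected by a cochain that
counts carries, so `α` dies in the Connes complex `C / (1 - t)`.

As the rows of the Tsygan bicomplex are exact over `ℚ`, it suffices that the Connes complex is exact
in odd degrees. In each weight the periodicity sequence relates the degrees `2k + 1` and `2k + 3`:
one goes up from `k = 0` as long as the weight is at least the critical one, and down from the large
`k`, where there are no chains, when it is smaller.
-/

section

open Finset Module

/-! ### Precyclic modules -/

/-- The identity behind `∂² = 0`, with the alternating signs absorbed into `f`. -/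
theorem sum_sum_eq_zero_of_antisymm_shift {A : Type*} [AddCommGroup A] (f : ℕ → ℕ → A) (m : ℕ)
    (hf : ∀ i j, i ≤ j → j < m → f i (j + 1) = -f j i) :
    ∑ i ∈ range m, ∑ j ∈ range (m + 1), f i j = 0 := by
  induction m with
  | zero => simp
  | succ m ih =>
    have last_col : ∑ i ∈ range (m + 1), f i (m + 1) = -∑ j ∈ range (m + 1), f m j := by
      rw [← sum_neg_distrib]
      exact sum_congr rfl fun i hi =>
        hf i m (Nat.lt_succ_iff.1 (mem_range.1 hi)) (Nat.lt_succ_self m)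
    have square := ih fun i j hij hj => hf i j hij (hj.trans (Nat.lt_succ_self m))
    simp only [sum_range_succ _ (m + 1), sum_add_distrib, last_col]
    rw [sum_range_succ, square, zero_add, add_neg_cancel]

/-- The data of a cyclic module that enters the Tsygan bicomplex: faces and cyclic operators, but no
degeneracies. The usual signs are absorbed, `face q i` being `(-1) ^ i` times the `i`-th face on
`C (q + 1)` (only `i ≤ q + 1` matters) and `t q` being `(-1) ^ q` times the cyclic permutation. -/
structure PrecyclicModule (R : Type*) [Ring R] (C : ℕ → Type*) [∀ q, AddCommGroup (C q)]
    [∀ q, Module R (C q)] where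
  face (q i : ℕ) : C (q + 1) →ₗ[R] C q
  t (q : ℕ) : C q →ₗ[R] C q
  face_face (q i j : ℕ) (hij : i ≤ j) (hj : j ≤ q + 1) (x : C (q + 2)) :
    face q i (face (q + 1) (j + 1) x) = -face q j (face (q + 1) i x)
  face_succ_t (q i : ℕ) (hi : i ≤ q) (x : C (q + 1)) :
    face q (i + 1) (t (q + 1) x) = t q (face q i x)
  face_zero_t (q : ℕ) (x : C (q + 1)) : face q 0 (t (q + 1) x) = face q (q + 1) x
  t_pow (q : ℕ) : t q ^ (q + 1) = 1

namespace PrecyclicModule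

section Ring

variable {R : Type*} [Ring R] {C : ℕ → Type*} [∀ q, AddCommGroup (C q)] [∀ q, Module R (C q)]
  (M : PrecyclicModule R C) {q : ℕ}

/-- The Hochschild boundary, the sum of all faces. -/
def b (q : ℕ) : C (q + 1) →ₗ[R] C q := ∑ i ∈ range (q + 2), M.face q i

/-- The bar boundary `b'`, which omits the last face. -/
def bar (q : ℕ) : C (q + 1) →ₗ[R] C q := ∑ i ∈ range (q + 1), M.face q i

/-- The norm operator of the cyclic group generated by `t`. -/
def norm (q : ℕ) : C q →ₗ[R] C q := ∑ i ∈ range (q + 1), M.t q ^ i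

theorem b_apply (x : C (q + 1)) : M.b q x = ∑ i ∈ range (q + 2), M.face q i x :=
  LinearMap.sum_apply ..

theorem bar_apply (x : C (q + 1)) : M.bar q x = ∑ i ∈ range (q + 1), M.face q i x :=
  LinearMap.sum_apply ..

theorem norm_apply (x : C q) : M.norm q x = ∑ i ∈ range (q + 1), (M.t q ^ i) x :=
  LinearMap.sum_apply ..

theorem b_eq_bar_add (x : C (q + 1)) : M.b q x = M.bar q x + M.face q (q + 1) x := by
  rw [b_apply, bar_apply, sum_range_succ]

theorem b_b (x : C (q + 2)) : M.b q (M.b (q + 1) x) = 0 := by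
  simp only [b_apply, map_sum]
  rw [sum_comm]
  exact sum_sum_eq_zero_of_antisymm_shift (fun i j => M.face q i (M.face (q + 1) j x)) (q + 2)
    fun i j hij hj => M.face_face q i j hij (by omega) x

theorem bar_bar (x : C (q + 2)) : M.bar q (M.bar (q + 1) x) = 0 := by
  simp only [bar_apply, map_sum]
  rw [sum_comm]
  exact sum_sum_eq_zero_of_antisymm_shift (fun i j => M.face q i (M.face (q + 1) j x)) (q + 1)
    fun i j hij hj => M.face_face q i j hij (by omega) x

theorem b_sub_t (x : C (q + 1)) :
    M.b q (x - M.t (q + 1) x) = M.bar q x - M.t q (M.bar q x) := by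
  have b_t : M.b q (M.t (q + 1) x) = M.t q (M.bar q x) + M.face q (q + 1) x := by
    rw [b_apply, sum_range_succ', face_zero_t, bar_apply, map_sum]
    congr 1
    exact sum_congr rfl fun i hi => M.face_succ_t q i (Nat.lt_succ_iff.1 (mem_range.1 hi)) x
  rw [map_sub, b_t, b_eq_bar_add]
  abel

theorem t_pow_succ_apply (i : ℕ) (x : C q) : (M.t q ^ (i + 1)) x = M.t q ((M.t q ^ i) x) := by
  rw [pow_succ', End.mul_apply]

theorem sum_t_pow_sub_t (i : ℕ) (x : C q) :
    ∑ j ∈ range i, (M.t q ^ j) x - M.t q (∑ j ∈ range i, (M.t q ^ j) x) = x - (M.t q ^ i) x := by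
  simp only [map_sum, ← t_pow_succ_apply, ← sum_sub_distrib]
  exact sum_range_sub' (fun j => (M.t q ^ j) x) i

theorem t_norm (x : C q) : M.t q (M.norm q x) = M.norm q x := by
  have := M.sum_t_pow_sub_t (q + 1) x
  rw [t_pow, End.one_apply, sub_self, sub_eq_zero, ← norm_apply] at this
  exact this.symm

theorem norm_t (x : C q) : M.norm q (M.t q x) = M.norm q x := by
  rw [← M.t_norm x]
  simp only [norm_apply, map_sum, ← t_pow_succ_apply]
  exact sum_congr rfl fun i _ => by rw [pow_succ, End.mul_apply]

theorem norm_t_pow (i : ℕ) (x : C q) : M.norm q ((M.t q ^ i) x) = M.norm q x := by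
  induction i with
  | zero => rfl
  | succ i ih => rw [t_pow_succ_apply, norm_t, ih]

theorem t_pow_apply_of_fixed {x : C q} (hx : M.t q x = x) (i : ℕ) : (M.t q ^ i) x = x := by
  rw [End.pow_apply]
  exact Function.iterate_fixed hx i

theorem face_of_fixed {x : C (q + 1)} (hx : M.t (q + 1) x = x) {i : ℕ} (hi : i ≤ q + 1) :
    M.face q i x = (M.t q ^ i) (M.face q 0 x) := by
  induction i with
  | zero => rfl
  | succ i ih =>
    rw [t_pow_succ_apply, ← ih (by omega), ← face_succ_t M q i (by omega), hx]

theorem face_zero_t_pow (x : C (q + 1)) {j : ℕ} (hj : j ≤ q + 1) :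
    M.face q 0 ((M.t (q + 1) ^ (j + 1)) x) = (M.t q ^ j) (M.face q (q + 1 - j) x) := by
  have shift (j : ℕ) : ∀ i, i + j ≤ q + 1 →
      M.face q (i + j) ((M.t (q + 1) ^ j) x) = (M.t q ^ j) (M.face q i x) := by
    induction j with
    | zero => exact fun i _ => rfl
    | succ j ih =>
      intro i hi
      rw [t_pow_succ_apply, t_pow_succ_apply, ← add_assoc, face_succ_t M q _ (by omega),
        ih i (by omega)]
  rw [t_pow_succ_apply, face_zero_t, ← shift j (q + 1 - j) (by omega), Nat.sub_add_cancel hj]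

/-- Both sides equal `N` applied to the zeroth face of `N x`. -/
theorem bar_norm (x : C (q + 1)) : M.bar q (M.norm (q + 1) x) = M.norm q (M.b q x) := by
  trans M.norm q (M.face q 0 (M.norm (q + 1) x))
  · rw [bar_apply, M.norm_apply (M.face _ _ _)]
    exact sum_congr rfl fun i hi =>
      M.face_of_fixed (M.t_norm x) (by have := mem_range.1 hi; omega)
  · rw [← M.t_norm x]
    simp only [norm_apply _ x, map_sum, ← t_pow_succ_apply, b_apply]
    rw [← sum_range_reflect]
    refine sum_congr rfl fun i hi => ?_
    have := mem_range.1 hi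
    rw [face_zero_t_pow _ _ (by omega), norm_t_pow,
      show q + 1 - (q + 1 + 1 - 1 - i) = i by omega]

/-- Vanishing in degree `q + 1` of the homology of the Connes complex `C / (1 - t)`. -/
def ConnesExact (q : ℕ) : Prop :=
  ∀ (z : C (q + 1)) (x : C q), M.b q z = x - M.t q x →
    ∃ (y : C (q + 2)) (x' : C (q + 1)), z = M.b (q + 1) y + (x' - M.t (q + 1) x')

/-- The vertical differential of column `p` of the Tsygan bicomplex. -/
def colD (p q : ℕ) : C (q + 1) →ₗ[R] C q := if Even p then M.b q else -M.bar q

/-- The horizontal differential of the Tsygan bicomplex from column `p + 1` to column `p`. -/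
def rowD (p q : ℕ) : C q →ₗ[R] C q := if Even (p + 1) then M.norm q else LinearMap.id - M.t q

/-- The component in position `(p, q)`, `p = m - q`, of the differential of the total Tsygan complex
from degree `m + 1`; the chain `Y` has its component in position `(m + 1 - q, q)` given by `Y q`. -/
def totalD (m : ℕ) (Y : ∀ q, C q) (q : ℕ) : C q :=
  M.colD (m - q) q (Y (q + 1)) + M.rowD (m - q) q (Y q)

theorem colD_colD (p : ℕ) (x : C (q + 2)) : M.colD p q (M.colD p (q + 1) x) = 0 := by
  unfold colD
  split_ifs <;> simp [b_b, bar_bar]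

theorem colD_rowD_add (p : ℕ) (x : C (q + 1)) :
    M.colD p q (M.rowD p (q + 1) x) + M.rowD p q (M.colD (p + 1) q x) = 0 := by
  rcases Nat.even_or_odd p with hp | hp
  · have hp' : ¬Even (p + 1) := by simpa [Nat.even_add_one] using hp
    simp only [colD, rowD, hp, hp', if_true, if_false, LinearMap.sub_apply, LinearMap.id_apply,
      LinearMap.neg_apply, b_sub_t, map_neg]
    abel
  · have hp' : ¬Even p := by simpa using hp
    simp [colD, rowD, hp', hp.add_one, bar_norm]

variable {M}

theorem exists_eq_b_add_sub_t
    (hb : LinearMap.ker (M.b q) ≤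
      LinearMap.range (M.b (q + 1)) ⊔ LinearMap.range (LinearMap.id - M.t (q + 1)))
    {z s : C (q + 1)} (hzs : M.b q z = M.bar q s - M.t q (M.bar q s)) :
    ∃ (y : C (q + 2)) (x : C (q + 1)), z = M.b (q + 1) y + (x - M.t (q + 1) x) := by
  have cycle : M.b q (z - (s - M.t _ s)) = 0 := by rw [map_sub, b_sub_t, hzs, sub_self]
  obtain ⟨_, ⟨y, rfl⟩, _, ⟨x, rfl⟩, hyx⟩ := Submodule.mem_sup.1 (hb cycle)
  refine ⟨y, x + s, ?_⟩
  rw [LinearMap.sub_apply, LinearMap.id_apply, eq_sub_iff_add_eq] at hyx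
  rw [← hyx, map_add]
  abel

theorem connesExact_zero
    (hb : LinearMap.ker (M.b 0) ≤
      LinearMap.range (M.b 1) ⊔ LinearMap.range (LinearMap.id - M.t 1)) :
    M.ConnesExact 0 := by
  intro z x hzx
  have t_zero : M.t 0 = 1 := by simpa using M.t_pow 0
  exact exists_eq_b_add_sub_t hb (s := 0) (by simpa [t_zero] using hzx)

end Ring

section CharZero

variable {R : Type*} [DivisionRing R] [CharZero R] {C : ℕ → Type*} [∀ q, AddCommGroup (C q)]
  [∀ q, Module R (C q)] (M : PrecyclicModule R C) {q : ℕ}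

theorem inv_smul_nsmul_succ {A : Type*} [AddCommGroup A] [Module R A] (q : ℕ) (x : A) :
    (q + 1 : R)⁻¹ • ((q + 1) • x) = x := by
  rw [← Nat.cast_smul_eq_nsmul R, smul_smul, Nat.cast_add_one,
    inv_mul_cancel₀ (Nat.cast_add_one_ne_zero q), one_smul]

theorem exists_norm_eq_of_fixed {x : C q} (hx : M.t q x = x) : ∃ y, M.norm q y = x := by
  refine ⟨(q + 1 : R)⁻¹ • x, ?_⟩
  rw [map_smul, norm_apply, sum_congr rfl fun i _ => M.t_pow_apply_of_fixed hx i, sum_const,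
    card_range, inv_smul_nsmul_succ]

theorem exists_sub_t_eq_of_norm_eq_zero {x : C q} (hx : M.norm q x = 0) :
    ∃ y, y - M.t q y = x := by
  refine ⟨(q + 1 : R)⁻¹ • ∑ i ∈ range (q + 1), ∑ j ∈ range i, (M.t q ^ j) x, ?_⟩
  rw [map_smul, ← smul_sub, map_sum, ← sum_sub_distrib,
    sum_congr rfl fun i _ => M.sum_t_pow_sub_t i x, sum_sub_distrib, ← norm_apply, hx, sub_zero,
    sum_const, card_range, inv_smul_nsmul_succ]

theorem exists_rowD_eq_of_rowD_eq_zero (p : ℕ) {x : C q} (hx : M.rowD p q x = 0) :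
    ∃ y, M.rowD (p + 1) q y = x := by
  rcases Nat.even_or_odd (p + 1) with hp | hp
  · have hp' : ¬Even (p + 1 + 1) := by simpa [Nat.even_add_one] using hp
    rw [rowD, if_pos hp] at hx
    simpa [rowD, if_neg hp'] using M.exists_sub_t_eq_of_norm_eq_zero hx
  · rw [rowD, if_neg (Nat.not_even_iff_odd.2 hp)] at hx
    rw [rowD, if_pos hp.add_one]
    exact M.exists_norm_eq_of_fixed (sub_eq_zero.1 hx).symm

/-- Since the rows are exact, a cycle bounds as soon as its component in column `0` does. -/
theorem exists_totalD_eq {m : ℕ} (hM : M.ConnesExact m) (Z : ∀ q, C q)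
    (hZ : ∀ q ≤ m, M.totalD m Z q = 0) : ∃ Y, ∀ q ≤ m + 1, M.totalD (m + 1) Y q = Z q := by
  suffices ∀ j ≤ m + 1, ∃ Y : ∀ q, C q, ∀ q, j ≤ q → q ≤ m + 1 → M.totalD (m + 1) Y q = Z q by
    obtain ⟨Y, hY⟩ := this 0 (Nat.zero_le _)
    exact ⟨Y, fun q => hY q (Nat.zero_le q)⟩
  intro j hj
  induction hj using Nat.decreasingInduction with
  | self =>
    have top : M.b m (Z (m + 1)) + (Z m - M.t m (Z m)) = 0 := by
      simpa [totalD, colD, rowD] using hZ m le_rfl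
    obtain ⟨y, x, hyx⟩ := hM (Z (m + 1)) (-Z m) (by
      rw [eq_neg_of_add_eq_zero_left top, map_neg]; abel)
    refine ⟨Function.update (Function.update 0 (m + 2) y) (m + 1) x, fun q hq hq' => ?_⟩
    obtain rfl : q = m + 1 := le_antisymm hq' hq
    simp [totalD, colD, rowD, hyx]
  | of_succ j hj ih =>
    obtain ⟨Y, hY⟩ := ih
    obtain ⟨p, rfl⟩ := Nat.exists_eq_add_of_le' (Nat.lt_succ_iff.1 hj)
    have hp : p + j - j = p := Nat.add_sub_cancel ..
    have hp' : p + j + 1 - j = p + 1 := by omega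
    have cycle := hZ j (by omega)
    have above : M.colD p (j + 1) (Y (j + 2)) + M.rowD p (j + 1) (Y (j + 1)) = Z (j + 1) := by
      simpa [totalD] using hY (j + 1) le_rfl (by omega)
    rw [totalD, hp, ← above, map_add, colD_colD, zero_add] at cycle
    obtain ⟨y, hy⟩ := M.exists_rowD_eq_of_rowD_eq_zero p
      (x := Z j - M.colD (p + 1) j (Y (j + 1))) (by
        rw [map_sub, sub_eq_zero, eq_neg_of_add_eq_zero_right cycle,
          eq_neg_of_add_eq_zero_left (M.colD_rowD_add p (Y (j + 1))), neg_neg])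
    refine ⟨Function.update Y j y, fun q hq hq' => ?_⟩
    rcases hq.eq_or_lt with rfl | hlt
    · rw [totalD, hp', Function.update_self, Function.update_of_ne (by omega), hy,
        add_sub_cancel]
    · rw [← hY q hlt hq', totalD, totalD, Function.update_of_ne (by omega),
        Function.update_of_ne (by omega)]

variable {M}

theorem ConnesExact.of_add_two (hM : M.ConnesExact (q + 2))
    (hbar : LinearMap.ker (M.bar q) ≤ LinearMap.range (M.bar (q + 1)))
    (hb : LinearMap.ker (M.b (q + 1)) ≤ LinearMap.range (M.b (q + 2))) :
    M.ConnesExact q := by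
  intro z x hzx
  have bar_norm_z : M.bar q (M.norm (q + 1) z) = 0 := by
    rw [bar_norm, hzx, map_sub, norm_t, sub_self]
  obtain ⟨v, hv⟩ := hbar bar_norm_z
  have b_sub_t_v : M.b (q + 1) (v - M.t _ v) = 0 := by
    rw [b_sub_t, hv, t_norm, sub_self]
  obtain ⟨z', hz'⟩ := hb b_sub_t_v
  obtain ⟨y, x', rfl⟩ := hM z' v hz'
  have fixed : M.t _ (v - M.bar _ x') = v - M.bar _ x' := by
    rw [map_add, b_b, zero_add, b_sub_t] at hz'
    rw [map_sub, eq_comm, ← sub_eq_zero, sub_sub_sub_comm, hz', sub_self]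
  obtain ⟨s, hs⟩ := M.exists_norm_eq_of_fixed fixed
  have norm_eq : M.norm (q + 1) (z - M.b _ s) = 0 := by
    rw [map_sub, ← bar_norm, hs, map_sub, bar_bar, sub_zero, hv, sub_self]
  obtain ⟨u, hu⟩ := M.exists_sub_t_eq_of_norm_eq_zero norm_eq
  exact ⟨s, u, by rw [hu, add_sub_cancel]⟩

theorem ConnesExact.add_two (hM : M.ConnesExact q)
    (hbar : LinearMap.ker (M.bar (q + 1)) ≤ LinearMap.range (M.bar (q + 2)))
    (hb : LinearMap.ker (M.b (q + 2)) ≤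
      LinearMap.range (M.b (q + 3)) ⊔ LinearMap.range (LinearMap.id - M.t (q + 3))) :
    M.ConnesExact (q + 2) := by
  intro z x hzx
  have fixed : M.t _ (M.bar _ x) = M.bar _ x := by
    rw [eq_comm, ← sub_eq_zero, ← b_sub_t, ← hzx, b_b]
  obtain ⟨u, hu⟩ := M.exists_norm_eq_of_fixed fixed
  have norm_b_u : M.norm q (M.b q u) = 0 := by rw [← bar_norm, hu, bar_bar]
  obtain ⟨v, hv⟩ := M.exists_sub_t_eq_of_norm_eq_zero norm_b_u
  obtain ⟨y, y', rfl⟩ := hM u v hv.symm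
  have bar_sub_norm : M.bar (q + 1) (x - M.norm _ y) = 0 := by
    rw [map_sub, ← hu, bar_norm, map_add, map_sub (M.norm _) y', norm_t, sub_self, add_zero,
      sub_self]
  obtain ⟨s, hs⟩ := hbar bar_sub_norm
  refine exists_eq_b_add_sub_t hb (s := s) ?_
  rw [hs, hzx, map_sub, t_norm]
  abel

end CharZero

section Restrict

variable {R : Type*} [Ring R] {C : ℕ → Type*} [∀ q, AddCommGroup (C q)] [∀ q, Module R (C q)]
  (M : PrecyclicModule R C) (V : ∀ q, Submodule R (C q))
  (hface : ∀ q i, ∀ x ∈ V (q + 1), M.face q i x ∈ V q) (ht : ∀ q, ∀ x ∈ V q, M.t q x ∈ V q)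
  {q : ℕ}

/-- The precyclic submodule carried by submodules stable under the structure maps. -/
def restrict : PrecyclicModule R fun q => V q where
  face q i := (M.face q i).restrict (hface q i)
  t q := (M.t q).restrict (ht q)
  face_face q i j hij hj x := Subtype.ext (M.face_face q i j hij hj x)
  face_succ_t q i hi x := Subtype.ext (M.face_succ_t q i hi x)
  face_zero_t q x := Subtype.ext (M.face_zero_t q x)
  t_pow q := by
    rw [Module.End.pow_restrict]
    ext x
    simp [M.t_pow]

theorem coe_restrict_b (x : V (q + 1)) : ((M.restrict V hface ht).b q x : C q) = M.b q x := by
  simp only [b_apply, AddSubmonoidClass.coe_finsetSum]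
  rfl

theorem coe_restrict_bar (x : V (q + 1)) :
    ((M.restrict V hface ht).bar q x : C q) = M.bar q x := by
  simp only [bar_apply, AddSubmonoidClass.coe_finsetSum]
  rfl

end Restrict

end PrecyclicModule

/-! ### Words -/

namespace Ch

variable {n q : ℕ} {f g : ℕ → ℕ}

/-- The basis vector `x ^ (a 0 + 1) ⊗ ⋯ ⊗ x ^ (a q + 1)`. -/
def tensor (a : Fin (q + 1) → Fin n) : Ch n q :=
  (Finsupp.single a 1 : (Fin (q + 1) → Fin n) →₀ ℚ)

theorem linearCombination_tensor {A : Type*} [AddCommGroup A] [Module ℚ A]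
    (φ : (Fin (q + 1) → Fin n) → A) (a : Fin (q + 1) → Fin n) :
    Finsupp.linearCombination ℚ φ (tensor a) = φ a :=
  (Finsupp.linearCombination_single ..).trans (one_smul ℚ _)

theorem bbar_tensor (a : Fin (q + 2) → Fin n) :
    bbar n q (tensor a) = ∑ i : Fin (q + 1), (-1 : ℚ) ^ (i : ℕ) • merge a i :=
  linearCombination_tensor _ a

theorem bH_tensor (a : Fin (q + 2) → Fin n) :
    bH n q (tensor a) = bbar n q (tensor a) + (-1 : ℚ) ^ (q + 1) • mergeLast a := by
  rw [bbar_tensor]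
  exact linearCombination_tensor _ a

theorem tOp_tensor (a : Fin (q + 1) → Fin n) :
    tOp n q (tensor a) = (-1 : ℚ) ^ q • tensor fun j => a (j - 1) :=
  linearCombination_tensor _ a

/-- The tensor `x ^ (f 0 + 1) ⊗ ⋯ ⊗ x ^ (f q + 1)`; it vanishes as soon as `n ≤ f j` for some
`j ≤ q`, and the values of `f` beyond `q` are irrelevant. -/
def word (n q : ℕ) (f : ℕ → ℕ) : Ch n q :=
  if h : ∀ i : Fin (q + 1), f i < n then tensor fun i => ⟨f i, h i⟩ else 0

theorem word_eq_tensor (hf : ∀ i : Fin (q + 1), f i < n) :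
    word n q f = tensor fun i => ⟨f i, hf i⟩ :=
  dif_pos hf

theorem word_eq_zero {j : ℕ} (hj : j ≤ q) (hf : n ≤ f j) : word n q f = 0 :=
  dif_neg fun h => (h ⟨j, Nat.lt_succ_iff.2 hj⟩).not_ge hf

theorem word_congr (hfg : ∀ j ≤ q, f j = g j) : word n q f = word n q g := by
  have (i : Fin (q + 1)) : f i = g i := hfg i (Nat.lt_succ_iff.1 i.isLt)
  simp only [word, this]

/-- The exponents of a basis tensor, extended periodically to a sequence. -/
def exponents (a : Fin (q + 1) → Fin n) (j : ℕ) : ℕ := a (Fin.ofNat (q + 1) j)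

theorem exponents_val (a : Fin (q + 1) → Fin n) (i : Fin (q + 1)) : exponents a i = a i := by
  simp [exponents]

theorem word_exponents (a : Fin (q + 1) → Fin n) : word n q (exponents a) = tensor a := by
  rw [word_eq_tensor fun i => by rw [exponents_val]; exact (a i).isLt]
  simp only [exponents_val]

theorem hom_ext {A : Type*} [AddCommGroup A] [Module ℚ A] {F G : Ch n q →ₗ[ℚ] A}
    (h : ∀ f, (∀ j ≤ q, f j < n) → F (word n q f) = G (word n q f)) : F = G := by
  refine Finsupp.lhom_ext' fun a => LinearMap.ext_ring ?_
  have := h (exponents a) fun j _ => (a _).isLt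
  rwa [word_exponents] at this

/-- The linear map with prescribed values on words. -/
def lift {A : Type*} [AddCommGroup A] [Module ℚ A] (n q : ℕ) (φ : (ℕ → ℕ) → A) : Ch n q →ₗ[ℚ] A :=
  Finsupp.linearCombination ℚ fun a : Fin (q + 1) → Fin n => φ (exponents a)

theorem lift_word_eq_ite {A : Type*} [AddCommGroup A] [Module ℚ A] {φ : (ℕ → ℕ) → A}
    (hcongr : ∀ f', (∀ j ≤ q, f' j = f j) → φ f' = φ f) :
    lift n q φ (word n q f) = if ∀ j ≤ q, f j < n then φ f else 0 := by
  split_ifs with hf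
  · rw [word_eq_tensor fun i => hf i (Nat.lt_succ_iff.1 i.isLt)]
    refine (linearCombination_tensor _ _).trans (hcongr _ fun j hj => ?_)
    simp [exponents, Nat.mod_eq_of_lt (Nat.lt_succ_iff.2 hj)]
  · push Not at hf
    obtain ⟨j, hj, hfj⟩ := hf
    rw [word_eq_zero hj hfj, map_zero]

theorem lift_word {A : Type*} [AddCommGroup A] [Module ℚ A] {φ : (ℕ → ℕ) → A}
    (hcongr : ∀ f', (∀ j ≤ q, f' j = f j) → φ f' = φ f) (hzero : ∀ j ≤ q, n ≤ f j → φ f = 0) :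
    lift n q φ (word n q f) = φ f := by
  rw [lift_word_eq_ite hcongr]
  split_ifs with hf
  · rfl
  · push Not at hf
    obtain ⟨j, hj, hfj⟩ := hf
    exact (hzero j hj hfj).symm

/-- The exponents of the `i`-th face of a tensor with `q + 2` factors: the factors `i` and `i + 1`
are multiplied for `i ≤ q`, the last one and the first one otherwise. -/
def contract (q i : ℕ) (f : ℕ → ℕ) (j : ℕ) : ℕ :=
  if i ≤ q then if j < i then f j else if j = i then f i + f (i + 1) + 1 else f (j + 1)
  else if j = 0 then f (q + 1) + f 0 + 1 else f j

/-- The sequence `a, f 0, f 1, …`. -/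
def consSeq (a : ℕ) (f : ℕ → ℕ) (j : ℕ) : ℕ := if j = 0 then a else f (j - 1)

/-- The exponents of a cyclically permuted tensor with `q + 1` factors. -/
def rotate (q : ℕ) (f : ℕ → ℕ) (j : ℕ) : ℕ := consSeq (f q) f j

/-- The `i`-th face map of `Ch n`, with its sign. -/
def face (n q i : ℕ) : Ch n (q + 1) →ₗ[ℚ] Ch n q :=
  lift n (q + 1) fun f => (-1 : ℚ) ^ i • word n q (contract q i f)

theorem exists_le_contract {i j : ℕ} (hj : j ≤ q + 1) (f : ℕ → ℕ) :
    ∃ l ≤ q, f j ≤ contract q i f l := by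
  by_cases hi : i ≤ q
  · by_cases hji : j ≤ i
    · exact ⟨j, by omega, by grind [contract]⟩
    · exact ⟨j - 1, by omega, by grind [contract]⟩
  · by_cases hjq : j ≤ q
    · exact ⟨j, hjq, by grind [contract]⟩
    · exact ⟨0, by omega, by grind [contract]⟩

theorem face_word (i : ℕ) (f : ℕ → ℕ) :
    face n q i (word n (q + 1) f) = (-1 : ℚ) ^ i • word n q (contract q i f) := by
  refine lift_word (fun f' hf' => ?_) fun j hj hfj => ?_
  · congr 1
    exact word_congr fun j hj => by grind [contract]
  · obtain ⟨l, hl, hfl⟩ := exists_le_contract (i := i) hj f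
    rw [word_eq_zero hl (hfj.trans hfl), smul_zero]

theorem contract_contract {i j : ℕ} (hij : i ≤ j) (hj : j ≤ q + 1) (f : ℕ → ℕ) (l : ℕ)
    (hl : l ≤ q) :
    contract q i (contract (q + 1) (j + 1) f) l = contract q j (contract (q + 1) i f) l := by
  grind [contract]

theorem contract_succ_rotate {i : ℕ} (hi : i ≤ q) (f : ℕ → ℕ) (l : ℕ) (hl : l ≤ q) :
    contract q (i + 1) (rotate (q + 1) f) l = rotate q (contract q i f) l := by
  grind [contract, rotate, consSeq]

theorem contract_zero_rotate (f : ℕ → ℕ) (l : ℕ) :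
    contract q 0 (rotate (q + 1) f) l = contract q (q + 1) f l := by
  grind [contract, rotate, consSeq]

theorem rotate_iterate {k : ℕ} (hk : k ≤ q + 1) (f : ℕ → ℕ) (j : ℕ) (hj : j ≤ q) :
    (rotate q)^[k] f j = if j < k then f (j + (q + 1) - k) else f (j - k) := by
  induction k generalizing j with
  | zero => simp
  | succ k ih =>
    simp only [Function.iterate_succ_apply', rotate, consSeq]
    grind

theorem tOp_word (f : ℕ → ℕ) : tOp n q (word n q f) = (-1 : ℚ) ^ q • word n q (rotate q f) := by
  by_cases hf : ∀ i : Fin (q + 1), f i < n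
  · have hrotate (i : Fin (q + 1)) : rotate q f i = f (i - 1 : Fin (q + 1)) := by
      simp only [rotate, consSeq, Fin.coe_sub_one, Fin.ext_iff]
      split_ifs <;> simp_all
    rw [word_eq_tensor hf, word_eq_tensor fun i => by rw [hrotate]; exact hf _, tOp_tensor]
    simp only [hrotate]
  · obtain ⟨i, hi⟩ := not_forall.1 hf
    rw [word_eq_zero (Nat.lt_succ_iff.1 i.isLt) (not_lt.1 hi), map_zero]
    rcases (Nat.lt_succ_iff.1 i.isLt).eq_or_lt with h | h
    · rw [word_eq_zero (Nat.zero_le q) (by simpa [rotate, consSeq, ← h] using hi), smul_zero]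
    · rw [word_eq_zero (j := i + 1) h (by simpa [rotate, consSeq] using hi), smul_zero]

theorem tOp_pow (n q : ℕ) : tOp n q ^ (q + 1) = 1 := by
  have pow_word (k : ℕ) (f : ℕ → ℕ) :
      (tOp n q ^ k) (word n q f) = (-1 : ℚ) ^ (q * k) • word n q ((rotate q)^[k] f) := by
    induction k with
    | zero => simp
    | succ k ih =>
      rw [pow_succ', Module.End.mul_apply, ih, map_smul, tOp_word, smul_smul, ← pow_add,
        Function.iterate_succ_apply', mul_add_one]
  refine hom_ext fun f _ => ?_
  rw [pow_word, (Nat.even_mul_succ_self q).neg_one_pow, one_smul, Module.End.one_apply]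
  exact word_congr fun j hj => by
    rw [rotate_iterate le_rfl f j hj, if_pos (Nat.lt_succ_iff.2 hj), Nat.add_sub_cancel]

/-- The precyclic module computing the reduced cyclic homology of `ℚ[x] / (x ^ (n + 1))`. -/
def precyclic (n : ℕ) : PrecyclicModule ℚ (Ch n) where
  face := face n
  t := tOp n
  face_face q i j hij hj x := by
    refine LinearMap.congr_fun (f := face n q i ∘ₗ face n (q + 1) (j + 1))
      (g := -(face n q j ∘ₗ face n (q + 1) i)) (hom_ext fun f _ => ?_) x
    simp only [LinearMap.comp_apply, LinearMap.neg_apply, face_word, map_smul,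
      word_congr (contract_contract hij hj f)]
    module
  face_succ_t q i hi x := by
    refine LinearMap.congr_fun (f := face n q (i + 1) ∘ₗ tOp n (q + 1)) (g := tOp n q ∘ₗ face n q i)
      (hom_ext fun f _ => ?_) x
    simp only [LinearMap.comp_apply, face_word, tOp_word, map_smul,
      word_congr (contract_succ_rotate hi f)]
    module
  face_zero_t q x := by
    refine LinearMap.congr_fun (f := face n q 0 ∘ₗ tOp n (q + 1)) (g := face n q (q + 1))
      (hom_ext fun f _ => ?_) x
    simp only [LinearMap.comp_apply, face_word, tOp_word, map_smul, pow_zero, one_smul,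
      word_congr fun l _ => contract_zero_rotate f l]
  t_pow := tOp_pow n

theorem merge_eq_word (hf : ∀ i : Fin (q + 2), f i < n) (i : Fin (q + 1)) :
    merge (fun j => ⟨f j, hf j⟩) i = word n q (contract q i f) := by
  have hi := Nat.lt_succ_iff.1 i.isLt
  have contract_self : contract q i f i = f i + f (i + 1) + 1 := by simp [contract, hi]
  by_cases h : f i + f (i + 1) + 1 < n
  · have lt (j : Fin (q + 1)) : contract q i f j < n := by
      have h₁ := hf j.castSucc
      have h₂ := hf j.succ
      simp only [Fin.val_castSucc, Fin.val_succ] at h₁ h₂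
      grind [contract]
    rw [word_eq_tensor lt]
    refine (dif_pos h).trans (congrArg tensor (funext fun j => Fin.ext ?_))
    simp only [contract, if_pos hi, apply_ite Fin.val, Fin.val_castSucc, Fin.val_succ]
  · rw [word_eq_zero hi (by rw [contract_self]; exact not_lt.1 h)]
    exact dif_neg h

theorem mergeLast_eq_word (hf : ∀ i : Fin (q + 2), f i < n) :
    mergeLast (fun j => ⟨f j, hf j⟩) = word n q (contract q (q + 1) f) := by
  have contract_zero : contract q (q + 1) f 0 = f (q + 1) + f 0 + 1 := by simp [contract]
  by_cases h : f (q + 1) + f 0 + 1 < n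
  · have lt (j : Fin (q + 1)) : contract q (q + 1) f j < n := by
      have h₁ := hf j.castSucc
      simp only [Fin.val_castSucc] at h₁
      grind [contract]
    rw [word_eq_tensor lt]
    refine (dif_pos h).trans (congrArg tensor (funext fun j => Fin.ext ?_))
    simp [contract, apply_ite Fin.val]
  · rw [word_eq_zero (Nat.zero_le q) (by rw [contract_zero]; exact not_lt.1 h)]
    exact dif_neg h

theorem precyclic_bar (n q : ℕ) : (precyclic n).bar q = bbar n q := by
  refine hom_ext fun f hf => ?_
  have hf' (i : Fin (q + 2)) := hf i (Nat.lt_succ_iff.1 i.isLt)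
  rw [PrecyclicModule.bar_apply, word_eq_tensor hf', bbar_tensor,
    ← Fin.sum_univ_eq_sum_range fun i => (precyclic n).face q i _, ← word_eq_tensor hf']
  exact Fintype.sum_congr _ _ fun i => by rw [merge_eq_word hf']; exact face_word i f

theorem precyclic_b (n q : ℕ) : (precyclic n).b q = bH n q := by
  refine hom_ext fun f hf => ?_
  have hf' (i : Fin (q + 2)) := hf i (Nat.lt_succ_iff.1 i.isLt)
  rw [PrecyclicModule.b_eq_bar_add, precyclic_bar, word_eq_tensor hf', bH_tensor,
    mergeLast_eq_word hf', ← word_eq_tensor hf']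
  exact congrArg _ (face_word (q + 1) f)

end Ch

/-! ### Weights and leading factors -/

namespace Ch

variable {n q w e a : ℕ} {f : ℕ → ℕ}

/-- The operator `x ↦ x ^ (a + 1) ⊗ x`. -/
def prepend (a : ℕ) : Ch n q →ₗ[ℚ] Ch n (q + 1) := lift n q fun f => word n (q + 1) (consSeq a f)

theorem prepend_word (a : ℕ) (f : ℕ → ℕ) :
    prepend a (word n q f) = word n (q + 1) (consSeq a f) := by
  refine lift_word (fun f' hf' => word_congr fun j hj => ?_) fun j hj hfj =>
    word_eq_zero (j := j + 1) (Nat.succ_le_succ hj) hfj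
  grind [consSeq]

/-- The left inverse of `prepend e`, which kills the tensors not beginning with `x ^ (e + 1)`. -/
def strip (e : ℕ) : Ch n (q + 1) →ₗ[ℚ] Ch n q :=
  lift n (q + 1) fun f => if f 0 = e then word n q fun j => f (j + 1) else 0

theorem strip_word (he : e < n) (f : ℕ → ℕ) :
    strip e (word n (q + 1) f) = if f 0 = e then word n q fun j => f (j + 1) else 0 := by
  refine lift_word (fun f' hf' => ?_) fun j hj hfj => ?_
  · rw [hf' 0 (Nat.zero_le _)]
    exact if_congr Iff.rfl (word_congr fun j hj => hf' (j + 1) (Nat.succ_le_succ hj)) rfl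
  · split_ifs with h
    · exact word_eq_zero (j := j - 1) (by omega) (by grind)
    · rfl

theorem strip_prepend (he : e < n) (x : Ch n q) : strip e (prepend e x) = x := by
  refine LinearMap.congr_fun (f := strip e ∘ₗ prepend e) (g := LinearMap.id)
    (hom_ext fun f _ => ?_) x
  simp [prepend_word, strip_word he, consSeq]

/-- The multiplication of the first tensor factor by `x`. -/
def mulX : Ch n q →ₗ[ℚ] Ch n q := face n q 0 ∘ₗ prepend 0

theorem mulX_word (f : ℕ → ℕ) :
    mulX (word n q f) = word n q (contract q 0 (consSeq 0 f)) := by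
  rw [mulX, LinearMap.comp_apply, prepend_word, face_word, pow_zero, one_smul]

theorem strip_zero_mulX (hn : 0 < n) (x : Ch n (q + 1)) : strip 0 (mulX x) = 0 := by
  refine LinearMap.congr_fun (f := strip 0 ∘ₗ mulX) (g := 0) (hom_ext fun f _ => ?_) x
  simp [mulX_word, strip_word hn, consSeq, contract]

theorem strip_succ_mulX (he : e + 1 < n) (x : Ch n (q + 1)) :
    strip (e + 1) (mulX x) = strip e x := by
  refine LinearMap.congr_fun (f := strip (e + 1) ∘ₗ mulX) (hom_ext fun f _ => ?_) x
  simp [mulX_word, strip_word he, strip_word (Nat.lt_of_succ_lt he), consSeq, contract]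

theorem face_succ_prepend {i : ℕ} (hi : i ≤ q) (a : ℕ) (x : Ch n (q + 1)) :
    face n (q + 1) (i + 1) (prepend a x) = -prepend a (face n q i x) := by
  refine LinearMap.congr_fun (f := face n (q + 1) (i + 1) ∘ₗ prepend a)
    (g := -(prepend a ∘ₗ face n q i)) (hom_ext fun f _ => ?_) x
  have : word n (q + 1) (contract (q + 1) (i + 1) (consSeq a f)) =
      word n (q + 1) (consSeq a (contract q i f)) :=
    word_congr fun j _ => by grind [contract, consSeq]
  simp only [LinearMap.comp_apply, LinearMap.neg_apply, prepend_word, face_word, map_smul, this]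
  module

theorem bar_prepend (a : ℕ) (x : Ch n (q + 1)) :
    (precyclic n).bar (q + 1) (prepend a x) =
      face n (q + 1) 0 (prepend a x) - prepend a ((precyclic n).bar q x) := by
  rw [PrecyclicModule.bar_apply, PrecyclicModule.bar_apply, map_sum, sub_eq_add_neg,
    ← sum_neg_distrib]
  refine (sum_range_succ' (fun i => face n (q + 1) i (prepend a x)) _).trans
    ((add_comm _ _).trans ?_)
  congr 1
  exact sum_congr rfl fun i hi =>
    face_succ_prepend (Nat.lt_succ_iff.1 (mem_range.1 hi)) a x

/-- The degree of `x ^ (f 0 + 1) ⊗ ⋯ ⊗ x ^ (f q + 1)` in `x`. -/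
def weight (q : ℕ) (f : ℕ → ℕ) : ℕ := ∑ j ∈ range (q + 1), (f j + 1)

theorem lt_weight (q : ℕ) (f : ℕ → ℕ) : q < weight q f :=
  (card_range (q + 1)).symm.trans_le (card_eq_sum_ones (range (q + 1)) ▸
    sum_le_sum fun _ _ => Nat.le_add_left 1 _)

theorem weight_contract (q i : ℕ) (f : ℕ → ℕ) :
    weight q (contract q i f) = weight (q + 1) f := by
  rw [weight, weight]
  by_cases hi : i ≤ q
  · induction i generalizing q f with
    | zero =>
      simp only [sum_range_succ' _ (q + 1), sum_range_succ' _ q]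
      grind [contract]
    | succ i ih =>
      obtain ⟨q, rfl⟩ := Nat.exists_eq_succ_of_ne_zero (Nat.ne_of_gt (Nat.zero_lt_of_lt hi))
      rw [sum_range_succ', sum_range_succ' _ (q + 2),
        ← ih q (fun j => f (j + 1)) (Nat.le_of_succ_le_succ hi)]
      simp [contract, Nat.le_of_succ_le_succ hi]
  · rw [sum_range_succ', sum_range_succ, sum_range_succ' _ q]
    grind [contract]

theorem weight_succ (q : ℕ) (f : ℕ → ℕ) :
    weight (q + 1) f = weight q (fun j => f (j + 1)) + (f 0 + 1) :=
  sum_range_succ' _ (q + 1)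

theorem weight_consSeq (a : ℕ) (f : ℕ → ℕ) : weight (q + 1) (consSeq a f) = weight q f + (a + 1) :=
  weight_succ q (consSeq a f)

theorem weight_rotate (q : ℕ) (f : ℕ → ℕ) : weight q (rotate q f) = weight q f := by
  rw [weight, weight, sum_range_succ', sum_range_succ]
  simp [rotate, consSeq]

/-- The chains of weight `w` spanned by the tensors whose first exponent is at least `e + 1`. -/
def leadSpace (n q w e : ℕ) : Submodule ℚ (Ch n q) :=
  Submodule.span ℚ (word n q '' {f | (∀ j ≤ q, f j < n) ∧ weight q f = w ∧ e ≤ f 0})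

/-- The chains of weight `w`. -/
abbrev weightSpace (n q w : ℕ) : Submodule ℚ (Ch n q) := leadSpace n q w 0

theorem word_mem_leadSpace (hw : weight q f = w) (he : e ≤ f 0) :
    word n q f ∈ leadSpace n q w e := by
  by_cases hf : ∀ j ≤ q, f j < n
  · exact Submodule.subset_span ⟨f, ⟨hf, hw, he⟩, rfl⟩
  · push Not at hf
    obtain ⟨j, hj, hfj⟩ := hf
    rw [word_eq_zero hj hfj]
    exact zero_mem _

theorem leadSpace_le {U : Submodule ℚ (Ch n q)}
    (h : ∀ f, (∀ j ≤ q, f j < n) → weight q f = w → e ≤ f 0 → word n q f ∈ U) :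
    leadSpace n q w e ≤ U :=
  Submodule.span_le.2 <| Set.image_subset_iff.2 fun f hf => h f hf.1 hf.2.1 hf.2.2

theorem map_mem_of_word {A : Type*} [AddCommGroup A] [Module ℚ A] {F : Ch n q →ₗ[ℚ] A}
    {U : Submodule ℚ A}
    (h : ∀ f, (∀ j ≤ q, f j < n) → weight q f = w → e ≤ f 0 → F (word n q f) ∈ U) {x : Ch n q}
    (hx : x ∈ leadSpace n q w e) : F x ∈ U :=
  leadSpace_le (U := U.comap F) h hx

theorem eq_of_eq_word {A : Type*} [AddCommGroup A] [Module ℚ A] {F G : Ch n q →ₗ[ℚ] A}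
    (h : ∀ f, (∀ j ≤ q, f j < n) → weight q f = w → e ≤ f 0 → F (word n q f) = G (word n q f))
    {x : Ch n q} (hx : x ∈ leadSpace n q w e) : F x = G x := by
  rw [← sub_eq_zero, ← LinearMap.sub_apply, ← Submodule.mem_bot ℚ]
  refine map_mem_of_word (fun f hf hw he => ?_) hx
  rw [LinearMap.sub_apply, h f hf hw he, sub_self]
  exact zero_mem _

theorem leadSpace_anti {e' : ℕ} (he : e ≤ e') : leadSpace n q w e' ≤ leadSpace n q w e :=
  Submodule.span_mono (Set.image_mono fun _ hf => ⟨hf.1, hf.2.1, he.trans hf.2.2⟩)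

theorem leadSpace_eq_bot (hw : w ≤ q) : leadSpace n q w e = ⊥ :=
  eq_bot_iff.2 <| leadSpace_le fun f _ hf _ =>
    absurd (hf.trans_le hw) (lt_weight q f).not_ge

theorem leadSpace_self (n q w : ℕ) : leadSpace n q w n = ⊥ :=
  eq_bot_iff.2 <| leadSpace_le fun _ hf _ he =>
    absurd (hf 0 (Nat.zero_le q)) he.not_gt

theorem face_mem (i : ℕ) {x : Ch n (q + 1)} (hx : x ∈ leadSpace n (q + 1) w e) :
    face n q i x ∈ leadSpace n q w e := by
  refine map_mem_of_word (fun f _ hw he => ?_) hx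
  rw [face_word]
  exact Submodule.smul_mem _ _
    (word_mem_leadSpace ((weight_contract q i f).trans hw) (he.trans (by grind [contract])))

theorem bar_mem {x : Ch n (q + 1)} (hx : x ∈ leadSpace n (q + 1) w e) :
    (precyclic n).bar q x ∈ leadSpace n q w e := by
  rw [PrecyclicModule.bar_apply]
  exact sum_mem fun i _ => face_mem i hx

theorem b_mem {x : Ch n (q + 1)} (hx : x ∈ leadSpace n (q + 1) w e) :
    (precyclic n).b q x ∈ leadSpace n q w e := by
  rw [PrecyclicModule.b_apply]
  exact sum_mem fun i _ => face_mem i hx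

theorem t_mem {x : Ch n q} (hx : x ∈ weightSpace n q w) :
    (precyclic n).t q x ∈ weightSpace n q w := by
  refine map_mem_of_word (fun f _ hw _ => ?_) hx
  refine (tOp_word f).symm ▸ Submodule.smul_mem _ _
    (word_mem_leadSpace ((weight_rotate q f).trans hw) (Nat.zero_le _))

theorem prepend_mem {x : Ch n q} (hx : x ∈ weightSpace n q (w - (a + 1))) :
    prepend a x ∈ leadSpace n (q + 1) w a := by
  refine map_mem_of_word (fun f _ hw _ => ?_) hx
  rw [prepend_word]
  have := lt_weight q f
  exact word_mem_leadSpace (by rw [weight_consSeq]; omega) le_rfl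

theorem strip_mem (ha : a < n) {x : Ch n (q + 1)} (hx : x ∈ weightSpace n (q + 1) w) :
    strip a x ∈ weightSpace n q (w - (a + 1)) := by
  refine map_mem_of_word (fun f _ hw _ => ?_) hx
  rw [strip_word ha]
  split_ifs with h
  · refine word_mem_leadSpace ?_ (Nat.zero_le _)
    rw [← hw, weight_succ, h, Nat.add_sub_cancel]
  · exact zero_mem _

theorem sub_prepend_strip_mem (he : e < n) {x : Ch n (q + 1)}
    (hx : x ∈ leadSpace n (q + 1) w e) :
    x - prepend e (strip e x) ∈ leadSpace n (q + 1) w (e + 1) := by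
  refine map_mem_of_word (F := LinearMap.id - prepend e ∘ₗ strip e) (fun f _ hw hf => ?_) hx
  rw [LinearMap.sub_apply, LinearMap.comp_apply, strip_word he, LinearMap.id_apply]
  split_ifs with h
  · have : word n (q + 1) (consSeq e fun j => f (j + 1)) = word n (q + 1) f :=
      word_congr fun j _ => by grind [consSeq]
    rw [prepend_word, this, sub_self]
    exact zero_mem _
  · rw [map_zero, sub_zero]
    exact word_mem_leadSpace hw (by omega)

theorem strip_eq_zero (he : e < n) {x : Ch n (q + 1)} (hx : x ∈ leadSpace n (q + 1) w (e + 1)) :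
    strip e x = 0 := by
  refine eq_of_eq_word (G := 0) (fun f _ _ hf => ?_) hx
  rw [strip_word he, if_neg (by omega), LinearMap.zero_apply]

end Ch

/-! ### The bar complex -/

namespace Ch

variable {n q w : ℕ}

/-- The cycles of the bar complex, in which `Ch n 0` has zero differential. -/
def barCycles (n : ℕ) : ∀ q, Submodule ℚ (Ch n q)
  | 0 => ⊤
  | q + 1 => LinearMap.ker ((precyclic n).bar q)

/-- The chains of weight `w` which are bar boundaries of chains of weight `w`. -/
def barBoundaries (n q w : ℕ) : Submodule ℚ (Ch n q) :=
  (weightSpace n (q + 1) w).map ((precyclic n).bar q)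

/-- Exactness of the bar complex at `Ch n q` in weight `w`. -/
def BarExact (n q w : ℕ) : Prop :=
  barCycles n q ⊓ weightSpace n q w ≤ barBoundaries n q w

theorem bar_prepend_zero (x : Ch n (q + 1)) :
    (precyclic n).bar (q + 1) (prepend 0 x) = mulX x - prepend 0 ((precyclic n).bar q x) :=
  bar_prepend 0 x

theorem bar_prepend_pred (x : Ch n (q + 1)) :
    (precyclic n).bar (q + 1) (prepend (n - 1) x) = -prepend (n - 1) ((precyclic n).bar q x) := by
  have : face n (q + 1) 0 ∘ₗ prepend (n - 1) = 0 := hom_ext fun f _ => by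
    rw [LinearMap.comp_apply, prepend_word, face_word,
      word_eq_zero (Nat.zero_le _) (by grind [contract, consSeq]), smul_zero, LinearMap.zero_apply]
  rw [bar_prepend, ← LinearMap.comp_apply, this, LinearMap.zero_apply, zero_sub]

theorem mulX_prepend_pred (x : Ch n q) : mulX (prepend (n - 1) x) = 0 := by
  refine LinearMap.congr_fun (f := mulX ∘ₗ prepend (n - 1)) (g := 0) (hom_ext fun f _ => ?_) x
  rw [LinearMap.comp_apply, prepend_word, mulX_word,
    word_eq_zero (Nat.zero_le _) (by grind [contract, consSeq]), LinearMap.zero_apply]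

/-- Modulo bar boundaries, `x ^ (a + 2) ⊗ y` is equivalent to `x ⊗ b' (x ^ (a + 1) ⊗ y)`. -/
theorem weightSpace_le_prepend_zero_sup (n q w : ℕ) :
    weightSpace n (q + 1) w ≤
      (weightSpace n q (w - 1)).map (prepend 0) ⊔ barBoundaries n (q + 1) w := by
  refine leadSpace_le fun f _ hw _ => ?_
  rcases Nat.eq_zero_or_pos (f 0) with h | h
  · have word_eq : word n (q + 1) f = prepend 0 (word n q fun j => f (j + 1)) := by
      rw [prepend_word]
      exact word_congr fun j _ => by grind [consSeq]
    rw [weight_succ, h] at hw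
    rw [word_eq]
    exact Submodule.mem_sup_left
      (Submodule.mem_map_of_mem (word_mem_leadSpace (by omega) (Nat.zero_le _)))
  · set x := word n (q + 1) fun j => if j = 0 then f 0 - 1 else f j
    have word_eq : word n (q + 1) f = mulX x := by
      rw [mulX_word]
      exact word_congr fun j _ => by grind [contract, consSeq]
    have hx : x ∈ weightSpace n (q + 1) (w - 1) := by
      refine word_mem_leadSpace ?_ (Nat.zero_le _)
      rw [← hw, weight_succ, weight_succ]
      simp only [Nat.succ_ne_zero, if_true, if_false]
      omega
    rw [word_eq, ← sub_add_cancel (mulX x), ← bar_prepend_zero,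
      add_comm ((precyclic n).bar (q + 1) _)]
    exact Submodule.add_mem_sup (Submodule.mem_map_of_mem (bar_mem hx))
      (Submodule.mem_map_of_mem (leadSpace_anti (Nat.zero_le _) (prepend_mem hx)))

theorem eq_prepend_pred_of_mulX_eq_zero (hn : 0 < n) {u : Ch n (q + 1)}
    (hu : u ∈ weightSpace n (q + 1) w) (h : mulX u = 0) :
    u = prepend (n - 1) (strip (n - 1) u) := by
  have mem (e : ℕ) (he : e ≤ n - 1) : u ∈ leadSpace n (q + 1) w e := by
    induction e with
    | zero => exact hu
    | succ e ih =>
      have := sub_prepend_strip_mem (by omega) (ih (by omega))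
      rwa [← strip_succ_mulX (by omega), h, map_zero, map_zero, sub_zero] at this
  have := sub_prepend_strip_mem (by omega) (mem (n - 1) le_rfl)
  rw [Nat.sub_add_cancel hn, leadSpace_self, Submodule.mem_bot] at this
  exact sub_eq_zero.1 this

/-- The bar complex is periodic: up to a boundary, a cycle is `x ⊗ x ^ n ⊗ y` for a cycle `y`. -/
theorem exists_mem_barCycles_sub_mem_barBoundaries (hn : 0 < n) {z : Ch n (q + 2)}
    (hz : z ∈ weightSpace n (q + 2) w) (hbar : (precyclic n).bar (q + 1) z = 0) :
    ∃ y ∈ barCycles n q ⊓ weightSpace n q (w - (n + 1)),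
      z - prepend 0 (prepend (n - 1) y) ∈ barBoundaries n (q + 2) w := by
  obtain ⟨_, ⟨u, hu, rfl⟩, _, ⟨v, hv, rfl⟩, rfl⟩ :=
    Submodule.mem_sup.1 (weightSpace_le_prepend_zero_sup n (q + 1) w hz)
  rw [map_add, PrecyclicModule.bar_bar, add_zero, bar_prepend_zero, sub_eq_zero] at hbar
  have bar_u : (precyclic n).bar q u = 0 := by
    rw [← strip_prepend hn ((precyclic n).bar q u), ← hbar, strip_zero_mulX hn]
  rw [bar_u, map_zero] at hbar
  have u_eq := eq_prepend_pred_of_mulX_eq_zero hn hu hbar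
  refine ⟨strip (n - 1) u, ⟨?_, ?_⟩, v, hv, ?_⟩
  · cases q with
    | zero => trivial
    | succ q =>
      rw [u_eq, bar_prepend_pred, neg_eq_zero] at bar_u
      refine LinearMap.mem_ker.2 ?_
      rw [← strip_prepend (Nat.sub_one_lt_of_lt hn) ((precyclic n).bar q _), bar_u, map_zero]
  · have := strip_mem (Nat.sub_one_lt_of_lt hn) hu
    rwa [show w - 1 - (n - 1 + 1) = w - (n + 1) by omega] at this
  · rw [← u_eq, add_sub_cancel_left]

theorem prepend_prepend_mem_barBoundaries (hn : 0 < n) {y : Ch n q}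
    (hy : y ∈ barBoundaries n q (w - (n + 1))) :
    prepend 0 (prepend (n - 1) y) ∈ barBoundaries n (q + 2) w := by
  obtain ⟨v, hv, rfl⟩ := hy
  refine ⟨prepend 0 (prepend (n - 1) v), prepend_mem (leadSpace_anti (Nat.zero_le _)
    (prepend_mem ?_)), ?_⟩
  · rwa [show w - (0 + 1) - (n - 1 + 1) = w - (n + 1) by omega]
  · rw [bar_prepend_zero, mulX_prepend_pred, bar_prepend_pred, map_neg, zero_sub, neg_neg]

theorem BarExact.add_two (hn : 0 < n) (h : BarExact n q (w - (n + 1))) : BarExact n (q + 2) w := by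
  rintro z ⟨hbar, hz⟩
  obtain ⟨y, hy, hzy⟩ := exists_mem_barCycles_sub_mem_barBoundaries hn hz hbar
  rw [← sub_add_cancel z (prepend 0 (prepend (n - 1) y))]
  exact add_mem hzy (prepend_prepend_mem_barBoundaries hn (h hy))

theorem exists_eq_smul_word {z : Ch n 0} (hz : z ∈ weightSpace n 0 w) :
    ∃ c : ℚ, z = c • word n 0 fun _ => w - 1 := by
  have : z ∈ Submodule.span ℚ {word n 0 fun _ => w - 1} := by
    refine leadSpace_le (fun f _ hw _ => ?_) hz
    have : word n 0 f = word n 0 fun _ => w - 1 :=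
      word_congr fun j hj => by simp [← hw, weight, Nat.le_zero.1 hj]
    exact Submodule.mem_span_singleton.2 ⟨1, by rw [this, one_smul]⟩
  obtain ⟨c, hc⟩ := Submodule.mem_span_singleton.1 this
  exact ⟨c, hc.symm⟩

theorem bar_zero_prepend_word (a : ℕ) :
    (precyclic n).bar 0 (prepend 0 (word n 0 fun _ => a)) = word n 0 fun _ => a + 1 := by
  rw [PrecyclicModule.bar_apply, sum_range_one]
  refine (mulX_word _).trans (word_congr fun j hj => ?_)
  simp [contract, consSeq, Nat.le_zero.1 hj]

theorem barExact_zero (hw : 1 < w) : BarExact n 0 w := by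
  rintro _ ⟨-, hz⟩
  obtain ⟨c, rfl⟩ := exists_eq_smul_word hz
  rw [show w - 1 = w - 2 + 1 by omega, ← bar_zero_prepend_word]
  refine Submodule.smul_mem _ _ (Submodule.mem_map_of_mem
    (leadSpace_anti (Nat.zero_le _) (prepend_mem (word_mem_leadSpace ?_ (Nat.zero_le _)))))
  rw [weight, sum_range_one]
  omega

theorem word_ne_zero (hf : ∀ i : Fin (q + 1), f i < n) : word n q f ≠ 0 := by
  rw [word_eq_tensor hf]
  exact Finsupp.single_ne_zero.2 one_ne_zero

theorem barExact_one (hw : w < n + 1) : BarExact n 1 w := by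
  intro z hz
  obtain ⟨hbar, hz⟩ := Submodule.mem_inf.1 hz
  rcases Nat.lt_or_ge 1 w with h | h
  · obtain ⟨_, ⟨_, hu, rfl⟩, _, ⟨v, hv, rfl⟩, rfl⟩ :=
      Submodule.mem_sup.1 (weightSpace_le_prepend_zero_sup n 0 w hz)
    obtain ⟨c, rfl⟩ := exists_eq_smul_word hu
    have : c • word n 0 (fun _ => w - 1 - 1 + 1) = 0 := by
      rw [← bar_zero_prepend_word, ← map_smul, ← map_smul]
      simpa only [map_add, PrecyclicModule.bar_bar, add_zero] using LinearMap.mem_ker.1 hbar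
    rw [(smul_eq_zero_iff_left (word_ne_zero fun _ => by omega)).1 this, zero_smul, map_zero,
      zero_add]
    exact Submodule.mem_map_of_mem hv
  · rw [weightSpace, leadSpace_eq_bot h, Submodule.mem_bot] at hz
    exact hz ▸ zero_mem _

theorem barExact_even (hn : 0 < n) (k : ℕ) (hw : (n + 1) * k + 1 < w) : BarExact n (2 * k) w := by
  induction k generalizing w with
  | zero => exact barExact_zero (by omega)
  | succ k ih => exact (ih (by grind)).add_two hn

theorem barExact_odd (hn : 0 < n) (k : ℕ) (hw : w < (n + 1) * (k + 1)) :
    BarExact n (2 * k + 1) w := by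
  induction k generalizing w with
  | zero => exact barExact_one (by omega)
  | succ k ih => exact (ih (by grind)).add_two hn

/-- The tensor `x ^ (a + 1) ⊗ x ^ (b + 1) ⊗ x ^ (a + 1) ⊗ ⋯` with alternating factors. -/
def altWord (n q a b : ℕ) : Ch n q := word n q fun j => if Even j then a else b

theorem prepend_altWord (n q a b : ℕ) : prepend b (altWord n q a b) = altWord n (q + 1) b a := by
  rw [altWord, prepend_word]
  exact word_congr fun j _ => by grind [consSeq]

theorem exists_sub_smul_altWord_mem_barBoundaries (hn : 0 < n) (k : ℕ) {z : Ch n (2 * k)}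
    (hz : z ∈ barCycles n (2 * k) ⊓ weightSpace n (2 * k) ((n + 1) * k + 1)) :
    ∃ c : ℚ, z - c • altWord n (2 * k) 0 (n - 1) ∈
      barBoundaries n (2 * k) ((n + 1) * k + 1) := by
  induction k with
  | zero =>
    obtain ⟨c, hc⟩ := exists_eq_smul_word hz.2
    have : z = c • altWord n (2 * 0) 0 (n - 1) :=
      hc.trans (congrArg (c • ·) (word_congr fun j hj => by simp [Nat.le_zero.1 hj]))
    exact ⟨c, sub_eq_zero.2 this ▸ zero_mem _⟩
  | succ k ih =>
    obtain ⟨y, hy, hzy⟩ :=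
      exists_mem_barCycles_sub_mem_barBoundaries (q := 2 * k) hn hz.2 hz.1
    have weight_eq : (n + 1) * (k + 1) + 1 - (n + 1) = (n + 1) * k + 1 := by grind
    rw [weight_eq] at hy
    obtain ⟨c, hc⟩ := ih hy
    have := add_mem hzy (prepend_prepend_mem_barBoundaries hn (weight_eq.symm ▸ hc))
    rw [map_sub, map_sub, map_smul, map_smul, prepend_altWord, prepend_altWord,
      sub_add_sub_cancel] at this
    exact ⟨c, this⟩

end Ch

/-! ### Hochschild homology -/

namespace Ch

variable {n q w e : ℕ}

theorem face_prepend_mem {i : ℕ} (hi : i = 0 ∨ q < i) {x : Ch n q}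
    (hx : x ∈ weightSpace n q (w - (e + 1))) :
    face n q i (prepend e x) ∈ leadSpace n q w (e + 1) := by
  refine map_mem_of_word (F := face n q i ∘ₗ prepend e) (fun f _ hw _ => ?_) hx
  have := lt_weight q f
  rw [LinearMap.comp_apply, prepend_word, face_word]
  refine Submodule.smul_mem _ _ (word_mem_leadSpace ?_ (by grind [contract, consSeq]))
  rw [weight_contract, weight_consSeq]
  omega

theorem b_prepend_add_mem {x : Ch n (q + 1)} (hx : x ∈ weightSpace n (q + 1) (w - (e + 1))) :
    (precyclic n).b (q + 1) (prepend e x) + prepend e ((precyclic n).bar q x) ∈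
      leadSpace n (q + 1) w (e + 1) := by
  rw [PrecyclicModule.b_eq_bar_add, bar_prepend, add_right_comm, sub_add_cancel]
  exact add_mem (face_prepend_mem (Or.inl rfl) hx)
    (face_prepend_mem (Or.inr (Nat.lt_succ_self _)) hx)

/-- The leading coefficients of a Hochschild cycle form a bar cycle. -/
theorem strip_mem_barCycles (he : e < n) {z : Ch n (q + 1)} (hz : z ∈ leadSpace n (q + 1) w e)
    (hb : (precyclic n).b q z = 0) : strip e z ∈ barCycles n q := by
  cases q with
  | zero => trivial
  | succ q =>
    have hu := strip_mem he (leadSpace_anti (Nat.zero_le e) hz)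
    have h₁ := strip_eq_zero he (b_mem (sub_prepend_strip_mem he hz))
    have h₂ := strip_eq_zero he (b_prepend_add_mem hu)
    rw [map_sub, hb, zero_sub, map_neg, neg_eq_zero] at h₁
    rw [map_add, h₁, zero_add, strip_prepend he] at h₂
    exact h₂

theorem add_b_prepend_mem_leadSpace_succ (he : e < n) {z : Ch n (q + 1)}
    (hz : z ∈ leadSpace n (q + 1) w e) {u : Ch n q} {v : Ch n (q + 1)}
    (hv : v ∈ weightSpace n (q + 1) (w - (e + 1)))
    (h : strip e z = u + (precyclic n).bar q v) :
    z - prepend e u + (precyclic n).b (q + 1) (prepend e v) ∈ leadSpace n (q + 1) w (e + 1) := by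
  have := add_mem (sub_prepend_strip_mem he hz) (b_prepend_add_mem hv)
  rw [h, map_add] at this
  convert this using 1
  abel

theorem exists_add_b_mem_leadSpace {z : Ch n (q + 1)} (hz : z ∈ weightSpace n (q + 1) w)
    (hb : (precyclic n).b q z = 0) {N : ℕ} (hN : N ≤ n)
    (hexact : ∀ e < N, BarExact n q (w - (e + 1))) :
    ∃ y ∈ weightSpace n (q + 2) w, z + (precyclic n).b (q + 1) y ∈ leadSpace n (q + 1) w N := by
  induction N with
  | zero => exact ⟨0, zero_mem _, by rwa [map_zero, add_zero]⟩
  | succ N ih =>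
    obtain ⟨y, hy, hzy⟩ := ih (Nat.le_of_succ_le hN) fun e he => hexact e (he.trans_le N.le_succ)
    set z' := z + (precyclic n).b (q + 1) y
    have hb' : (precyclic n).b q z' = 0 := by rw [map_add, hb, PrecyclicModule.b_b, add_zero]
    obtain ⟨v, hv, hbar⟩ := hexact N N.lt_succ_self
      ⟨strip_mem_barCycles hN hzy hb', strip_mem hN (leadSpace_anti (Nat.zero_le _) hzy)⟩
    refine ⟨y + prepend N v, add_mem hy (leadSpace_anti (Nat.zero_le _) (prepend_mem hv)), ?_⟩
    have := add_b_prepend_mem_leadSpace_succ hN hzy hv (u := 0) (by rw [zero_add, hbar])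
    rwa [map_zero, sub_zero, add_assoc, ← map_add] at this

theorem exists_eq_b_of_barExact {z : Ch n (q + 1)} (hz : z ∈ weightSpace n (q + 1) w)
    (hb : (precyclic n).b q z = 0) (hexact : ∀ e < n, BarExact n q (w - (e + 1))) :
    ∃ y ∈ weightSpace n (q + 2) w, (precyclic n).b (q + 1) y = z := by
  obtain ⟨y, hy, hzy⟩ := exists_add_b_mem_leadSpace hz hb le_rfl hexact
  rw [leadSpace_self, Submodule.mem_bot] at hzy
  exact ⟨-y, neg_mem hy, by rw [map_neg, neg_eq_of_add_eq_zero_left hzy]⟩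

theorem weight_sub_pred (hn : 0 < n) (k : ℕ) :
    (n + 1) * (k + 1) - (n - 1 + 1) = (n + 1) * k + 1 := by
  rw [Nat.sub_add_cancel hn]
  grind

/-- In the critical weight, a Hochschild cycle is a multiple of `x ^ n ⊗ x ⊗ x ^ n ⊗ x ⊗ ⋯` up to
a boundary. -/
theorem exists_eq_smul_altWord_add_b (hn : 0 < n) (k : ℕ) {z : Ch n (2 * k + 1)}
    (hz : z ∈ weightSpace n (2 * k + 1) ((n + 1) * (k + 1)))
    (hb : (precyclic n).b (2 * k) z = 0) :
    ∃ c : ℚ, ∃ y ∈ weightSpace n (2 * k + 2) ((n + 1) * (k + 1)),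
      z = c • altWord n (2 * k + 1) (n - 1) 0 + (precyclic n).b (2 * k + 1) y := by
  have pred_lt := Nat.sub_one_lt_of_lt hn
  obtain ⟨y, hy, hzy⟩ := exists_add_b_mem_leadSpace hz hb (Nat.sub_le n 1)
    fun e he => barExact_even hn k (by grind)
  set z' := z + (precyclic n).b (2 * k + 1) y
  have hb' : (precyclic n).b (2 * k) z' = 0 := by rw [map_add, hb, PrecyclicModule.b_b, add_zero]
  have hu := strip_mem pred_lt (leadSpace_anti (Nat.zero_le _) hzy)
  rw [weight_sub_pred hn] at hu
  obtain ⟨c, v, hv, hbar⟩ := exists_sub_smul_altWord_mem_barBoundaries hn k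
    ⟨strip_mem_barCycles pred_lt hzy hb', hu⟩
  have := add_b_prepend_mem_leadSpace_succ pred_lt hzy ((weight_sub_pred hn k).symm ▸ hv)
    (by rw [hbar, add_sub_cancel])
  rw [Nat.sub_add_cancel hn, leadSpace_self, Submodule.mem_bot, map_smul, prepend_altWord] at this
  refine ⟨c, -y - prepend (n - 1) v, sub_mem (neg_mem hy) (leadSpace_anti (Nat.zero_le _)
    (prepend_mem ((weight_sub_pred hn k).symm ▸ hv))), ?_⟩
  rw [map_sub, map_neg]
  grind

end Ch

/-! ### The critical weight -/

namespace Ch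

variable {n k : ℕ} {f : ℕ → ℕ}

/-- The product over `i < k` of the values at `x ^ (f (2i) + 1) ⊗ x ^ (f (2i + 1) + 1)` of the
2-cochain `x ^ a ⊗ x ^ b ↦ ⌊(a + b) / (n + 1)⌋`, the quotient of the division by `x ^ (n + 1)`
evaluated at `x = 1`. -/
def carryProd (n : ℕ) : ℕ → (ℕ → ℕ) → ℚ
  | 0, _ => 1
  | k + 1, f => (if n ≤ f 0 + f 1 + 1 then 1 else 0) * carryProd n k fun j => f (j + 2)

theorem carryProd_congr {g : ℕ → ℕ} (h : ∀ j < 2 * k, f j = g j) :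
    carryProd n k f = carryProd n k g := by
  induction k generalizing f g with
  | zero => rfl
  | succ k ih =>
    rw [carryProd, carryProd, h 0 (by omega), h 1 (by omega), ih fun j hj => h (j + 2) (by omega)]

theorem le_sum_of_carryProd_ne_zero (h : carryProd n k f ≠ 0) :
    (n + 1) * k ≤ ∑ j ∈ range (2 * k), (f j + 1) := by
  induction k generalizing f with
  | zero => simp
  | succ k ih =>
    rw [carryProd] at h
    have := ih (right_ne_zero_of_mul h)
    have : n ≤ f 0 + f 1 + 1 := by
      by_contra hlt
      exact left_ne_zero_of_mul h (if_neg hlt)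
    rw [show 2 * (k + 1) = 2 * k + 1 + 1 by ring, sum_range_succ', sum_range_succ']
    grind

/-- The truncated products contribute the indicators `f i + f (i + 1) + 1 < n`. -/
theorem sum_carryProd_contract (n k : ℕ) (f : ℕ → ℕ) :
    ∑ i ∈ range (2 * k), (-1 : ℚ) ^ i *
        (if f i + f (i + 1) + 1 < n then carryProd n k (contract (2 * k) i f) else 0) =
      carryProd n k (fun j => f (j + 1)) - carryProd n k f := by
  induction k generalizing f with
  | zero => simp [carryProd]
  | succ k ih =>
    set X := carryProd n k fun j => f (j + 3)
    have head (i : ℕ) (hi : i < 2) : carryProd n (k + 1) (contract (2 * k + 2) i f) =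
        (if n ≤ f 0 + f 1 + f 2 + 2 then 1 else 0) * X := by
      have : (fun j => contract (2 * k + 2) i f (j + 2)) = fun j => f (j + 3) := by
        funext j
        grind [contract]
      rw [carryProd, this]
      grind [contract]
    have tail_sum : ∑ i ∈ range (2 * k), (-1 : ℚ) ^ (i + 1 + 1) *
        (if f (i + 1 + 1) + f (i + 1 + 1 + 1) + 1 < n then
          carryProd n (k + 1) (contract (2 * k + 2) (i + 1 + 1) f) else 0) =
        (if n ≤ f 0 + f 1 + 1 then 1 else 0) *
          (X - carryProd n k fun j => f (j + 2)) := by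
      rw [← ih fun j => f (j + 2), mul_sum]
      refine sum_congr rfl fun i hi => ?_
      have hi := mem_range.1 hi
      have : (fun j => contract (2 * k + 2) (i + 1 + 1) f (j + 2)) =
          contract (2 * k) i fun j => f (j + 2) := by
        funext j
        grind [contract]
      rw [carryProd, this]
      grind [contract]
    rw [Nat.mul_succ, sum_range_succ' _ (2 * k + 1), sum_range_succ' _ (2 * k), tail_sum,
      head 0 two_pos, head 1 one_lt_two]
    change _ = (if n ≤ f 1 + f 2 + 1 then 1 else 0) * X - (if n ≤ f 0 + f 1 + 1 then 1 else 0) * _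
    grind

/-- The comparison map from the Hochschild complex to the 2-periodic complex, evaluated at `x = 1`:
`x ^ a₀ ⊗ x ^ a₁ ⊗ ⋯` is mapped to `a₁` times the carries of the remaining pairs. -/
def comparison (n k : ℕ) : Ch n (2 * k + 1) →ₗ[ℚ] ℚ :=
  lift n (2 * k + 1) fun f => (f 1 + 1) * carryProd n k fun j => f (j + 2)

theorem comparison_word (n k : ℕ) (f : ℕ → ℕ) :
    comparison n k (word n (2 * k + 1) f) =
      if ∀ j ≤ 2 * k + 1, f j < n then (f 1 + 1 : ℚ) * carryProd n k fun j => f (j + 2) else 0 :=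
  lift_word_eq_ite fun f' hf' => by
    rw [hf' 1 (by omega), carryProd_congr fun j hj => hf' (j + 2) (by omega)]

theorem comparison_word_contract (hf : ∀ j ≤ 2 * k + 2, f j < n) {i : ℕ} (hi : i ≤ 2 * k + 1) :
    comparison n k (word n (2 * k + 1) (contract (2 * k + 1) i f)) =
      if f i + f (i + 1) + 1 < n then
        (contract (2 * k + 1) i f 1 + 1 : ℚ) *
          carryProd n k fun j => contract (2 * k + 1) i f (j + 2)
      else 0 := by
  rw [comparison_word]
  refine if_congr ⟨fun h => ?_, fun h j hj => ?_⟩ rfl rfl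
  · have := h i hi
    grind [contract]
  · have := hf j (by omega)
    have := hf (j + 1) (by omega)
    grind [contract]

theorem comparison_word_contract_last (hf : ∀ j ≤ 2 * k + 2, f j < n) :
    comparison n k (word n (2 * k + 1) (contract (2 * k + 1) (2 * k + 2) f)) =
      if f (2 * k + 2) + f 0 + 1 < n then (f 1 + 1 : ℚ) * carryProd n k fun j => f (j + 2)
      else 0 := by
  rw [comparison_word]
  refine if_congr ⟨fun h => ?_, fun h j hj => ?_⟩ ?_ rfl
  · have := h 0 (Nat.zero_le _)
    grind [contract]
  · have := hf j (by omega)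
    grind [contract]
  · simp [contract]

theorem comparison_face (i : ℕ) (f : ℕ → ℕ) :
    comparison n k ((precyclic n).face (2 * k + 1) i (word n (2 * k + 2) f)) =
      (-1 : ℚ) ^ i * comparison n k (word n (2 * k + 1) (contract (2 * k + 1) i f)) :=
  (congrArg _ (face_word i f)).trans (map_smul _ _ _)

theorem sum_comparison_face (hf : ∀ j ≤ 2 * k + 2, f j < n) :
    ∑ i ∈ range (2 * k),
        comparison n k ((precyclic n).face (2 * k + 1) (i + 2) (word n (2 * k + 2) f)) =
      (f 1 + 1) * (carryProd n k (fun j => f (j + 3)) - carryProd n k fun j => f (j + 2)) := by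
  rw [← sum_carryProd_contract n k fun j => f (j + 2), mul_sum]
  refine sum_congr rfl fun i hi => ?_
  have hi := mem_range.1 hi
  have : (fun j => contract (2 * k + 1) (i + 2) f (j + 2)) =
      contract (2 * k) i fun j => f (j + 2) := by
    funext j
    grind [contract]
  rw [comparison_face, comparison_word_contract hf (by omega), this]
  grind [contract]

theorem first_three_le_of_carryProd_ne_zero (hw : weight (2 * k + 2) f = (n + 1) * (k + 1))
    (h : carryProd n k (fun j => f (j + 3)) ≠ 0) : f 0 + f 1 + f 2 + 2 ≤ n := by
  have weight_eq : weight (2 * k + 2) f =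
      ∑ j ∈ range (2 * k), (f (j + 3) + 1) + (f 2 + 1) + (f 1 + 1) + (f 0 + 1) := by
    simp only [weight, sum_range_succ']
  have := le_sum_of_carryProd_ne_zero h
  grind

theorem last_first_two_le_of_carryProd_ne_zero (hw : weight (2 * k + 2) f = (n + 1) * (k + 1))
    (h : carryProd n k (fun j => f (j + 2)) ≠ 0) : f (2 * k + 2) + f 0 + f 1 + 2 ≤ n := by
  have weight_eq : weight (2 * k + 2) f =
      ∑ j ∈ range (2 * k), (f (j + 2) + 1) + (f 1 + 1) + (f 0 + 1) + (f (2 * k + 2) + 1) := by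
    rw [weight, sum_range_succ, sum_range_succ', sum_range_succ']
  have := le_sum_of_carryProd_ne_zero h
  grind

/-- In the critical weight, a nonzero product of carries leaves no room for a truncation among the
other factors, so that the terms cancel. -/
theorem comparison_b {y : Ch n (2 * k + 2)}
    (hy : y ∈ weightSpace n (2 * k + 2) ((n + 1) * (k + 1))) :
    comparison n k ((precyclic n).b (2 * k + 1) y) = 0 := by
  refine eq_of_eq_word (F := comparison n k ∘ₗ (precyclic n).b (2 * k + 1)) (G := 0)
    (fun f hf hw _ => ?_) hy
  have carryProd_face {i : ℕ} (hi : i < 2) :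
      carryProd n k (fun j => contract (2 * k + 1) i f (j + 2)) =
        carryProd n k fun j => f (j + 3) := by
    congr 1
    funext j
    grind [contract]
  have neg_one_pow : (-1 : ℚ) ^ (2 * k + 2) = 1 := (even_two_mul (k + 1)).neg_one_pow
  rw [LinearMap.comp_apply, LinearMap.zero_apply, PrecyclicModule.b_apply, map_sum,
    sum_range_succ, sum_range_succ', sum_range_succ', sum_comparison_face hf, comparison_face,
    comparison_face, comparison_face, comparison_word_contract hf (by omega),
    comparison_word_contract hf (by omega), comparison_word_contract_last hf,
    carryProd_face (by omega), carryProd_face (by omega), neg_one_pow]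
  have h₁ := first_three_le_of_carryProd_ne_zero hw
  have h₂ := last_first_two_le_of_carryProd_ne_zero hw
  have contract_zero : contract (2 * k + 1) 0 f 1 = f 2 := by simp [contract]
  have contract_one : contract (2 * k + 1) 1 f 1 = f 1 + f 2 + 1 := by simp [contract]
  rw [contract_zero, contract_one]
  push_cast
  generalize carryProd n k (fun j => f (j + 3)) = A at *
  generalize carryProd n k (fun j => f (j + 2)) = B at *
  grind

theorem carryProd_alternating (hn : 0 < n) (k : ℕ) {a b : ℕ} (hab : a + b = n - 1) :
    carryProd n k (fun j => if Even j then a else b) = 1 := by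
  induction k with
  | zero => rfl
  | succ k ih =>
    rw [carryProd]
    simp only [Nat.even_add_one, not_not, ih]
    grind

theorem comparison_altWord {a b : ℕ} (hn : 0 < n) (hab : a + b = n - 1) (k : ℕ) :
    comparison n k (altWord n (2 * k + 1) a b) = b + 1 := by
  rw [altWord, comparison_word, if_pos fun j _ => by grind]
  simp [Nat.even_add_one, carryProd_alternating hn k hab]

theorem t_altWord (n k a b : ℕ) :
    (precyclic n).t (2 * k + 1) (altWord n (2 * k + 1) a b) = -altWord n (2 * k + 1) b a := by
  refine (tOp_word _).trans ?_
  rw [Odd.neg_one_pow ⟨k, rfl⟩, neg_one_smul, altWord]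
  congr 1
  exact word_congr fun j _ => by grind [rotate, consSeq]

theorem b_altWord (hn : 0 < n) {a b : ℕ} (hab : a + b = n - 1) (k : ℕ) :
    (precyclic n).b (2 * k) (altWord n (2 * k + 1) a b) = 0 := by
  rw [PrecyclicModule.b_apply]
  refine sum_eq_zero fun i hi => (face_word i _).trans ?_
  have hi := mem_range.1 hi
  rw [word_eq_zero (j := if i ≤ 2 * k then i else 0) (by grind) (by grind [contract]), smul_zero]

theorem altWord_mem_weightSpace (hn : 0 < n) {a b : ℕ} (hab : a + b = n - 1) (k : ℕ) :
    altWord n (2 * k + 1) a b ∈ weightSpace n (2 * k + 1) ((n + 1) * (k + 1)) := by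
  refine word_mem_leadSpace ?_ (Nat.zero_le _)
  induction k with
  | zero => grind [weight, sum_range_succ, sum_range_zero]
  | succ k ih =>
    rw [show 2 * (k + 1) + 1 = 2 * k + 1 + 1 + 1 by ring, weight_succ, weight_succ]
    simp only [Nat.even_add_one, not_not, ih]
    grind

/-- The critical class is killed in the Connes complex: it is `(n + 1)⁻¹` times its image under
`1 - t`, up to a boundary. -/
theorem exists_eq_b_add_sub_t (hn : 0 < n) (k : ℕ) {z : Ch n (2 * k + 1)}
    (hz : z ∈ weightSpace n (2 * k + 1) ((n + 1) * (k + 1)))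
    (hb : (precyclic n).b (2 * k) z = 0) :
    ∃ y ∈ weightSpace n (2 * k + 2) ((n + 1) * (k + 1)),
      ∃ x ∈ weightSpace n (2 * k + 1) ((n + 1) * (k + 1)),
        z = (precyclic n).b (2 * k + 1) y + (x - (precyclic n).t (2 * k + 1) x) := by
  set α := altWord n (2 * k + 1) (n - 1) 0
  set β := altWord n (2 * k + 1) 0 (n - 1)
  have hα_mem : α ∈ _ := altWord_mem_weightSpace hn (Nat.add_zero _) k
  have sub_t : α - (precyclic n).t (2 * k + 1) α = α + β := by
    rw [t_altWord, sub_neg_eq_add]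
  obtain ⟨c, v, hv, hcv⟩ := exists_eq_smul_altWord_add_b hn k
    (add_mem hα_mem (altWord_mem_weightSpace hn (Nat.zero_add _) k))
    (by rw [map_add, b_altWord hn (Nat.add_zero _), b_altWord hn (Nat.zero_add _), add_zero])
  have c_eq : c = n + 1 := by
    have := congrArg (comparison n k) hcv
    rw [map_add, map_add, map_smul, comparison_b hv, comparison_altWord hn (Nat.add_zero _),
      comparison_altWord hn (Nat.zero_add _), Nat.cast_pred hn] at this
    simp only [Nat.cast_zero, zero_add, sub_add_cancel, smul_eq_mul, mul_one, add_zero] at this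
    linarith
  have hc : c ≠ 0 := c_eq ▸ Nat.cast_add_one_ne_zero n
  obtain ⟨d, y, hy, rfl⟩ := exists_eq_smul_altWord_add_b hn k hz hb
  refine ⟨y - (d * c⁻¹) • v, sub_mem hy (Submodule.smul_mem _ _ hv), (d * c⁻¹) • α,
    Submodule.smul_mem _ _ hα_mem, ?_⟩
  rw [map_smul, ← smul_sub, sub_t, hcv, smul_add, smul_smul, mul_assoc, inv_mul_cancel₀ hc,
    mul_one, map_sub, map_smul]
  abel

end Ch

/-! ### The Connes complex and the total complex -/

namespace Ch

variable {n q k w : ℕ}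

/-- The part of weight `w` of the precyclic module of `ℚ[x] / (x ^ (n + 1))`. -/
def weightPrecyclic (n w : ℕ) : PrecyclicModule ℚ fun q => weightSpace n q w :=
  (precyclic n).restrict (fun q => weightSpace n q w) (fun _ i _ hx => face_mem i hx)
    fun _ _ hx => t_mem hx

theorem coe_weightPrecyclic_b (x : weightSpace n (q + 1) w) :
    ((weightPrecyclic n w).b q x : Ch n q) = (precyclic n).b q x :=
  PrecyclicModule.coe_restrict_b ..

theorem coe_weightPrecyclic_bar (x : weightSpace n (q + 1) w) :
    ((weightPrecyclic n w).bar q x : Ch n q) = (precyclic n).bar q x :=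
  PrecyclicModule.coe_restrict_bar ..

theorem BarExact.ker_bar_le (h : BarExact n (q + 1) w) :
    LinearMap.ker ((weightPrecyclic n w).bar q) ≤
      LinearMap.range ((weightPrecyclic n w).bar (q + 1)) := by
  rintro ⟨z, hz⟩ hbar
  have hbar : (precyclic n).bar q z = 0 :=
    (coe_weightPrecyclic_bar _).symm.trans (congrArg Subtype.val (LinearMap.mem_ker.1 hbar))
  obtain ⟨y, hy, hyz⟩ := h ⟨LinearMap.mem_ker.2 hbar, hz⟩
  exact ⟨⟨y, hy⟩, Subtype.ext ((coe_weightPrecyclic_bar _).trans hyz)⟩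

theorem b_eq_zero_of_mem_ker {z : weightSpace n (q + 1) w}
    (hz : z ∈ LinearMap.ker ((weightPrecyclic n w).b q)) : (precyclic n).b q z = 0 :=
  (coe_weightPrecyclic_b z).symm.trans (congrArg Subtype.val (LinearMap.mem_ker.1 hz))

theorem ker_b_le (h : ∀ e < n, BarExact n q (w - (e + 1))) :
    LinearMap.ker ((weightPrecyclic n w).b q) ≤
      LinearMap.range ((weightPrecyclic n w).b (q + 1)) := by
  intro z hz
  obtain ⟨y, hy, hyz⟩ := exists_eq_b_of_barExact z.2 (b_eq_zero_of_mem_ker hz) h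
  exact ⟨⟨y, hy⟩, Subtype.ext ((coe_weightPrecyclic_b _).trans hyz)⟩

theorem ker_b_le_sup (hn : 0 < n) (hw : (n + 1) * (k + 1) ≤ w) :
    LinearMap.ker ((weightPrecyclic n w).b (2 * k)) ≤
      LinearMap.range ((weightPrecyclic n w).b (2 * k + 1)) ⊔
        LinearMap.range (LinearMap.id - (weightPrecyclic n w).t (2 * k + 1)) := by
  rcases hw.eq_or_lt with rfl | hlt
  · intro z hz
    obtain ⟨y, hy, x, hx, hzyx⟩ := exists_eq_b_add_sub_t hn k z.2 (b_eq_zero_of_mem_ker hz)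
    refine Submodule.mem_sup.2 ⟨_, ⟨⟨y, hy⟩, rfl⟩, _, ⟨⟨x, hx⟩, rfl⟩, Subtype.ext ?_⟩
    rw [hzyx, Submodule.coe_add, coe_weightPrecyclic_b]
    rfl
  · exact (ker_b_le fun e he => barExact_even hn k (by grind)).trans le_sup_left

theorem connesExact_of_le (hn : 0 < n) (hw : (n + 1) * (k + 1) ≤ w) :
    (weightPrecyclic n w).ConnesExact (2 * k) := by
  induction k with
  | zero => exact PrecyclicModule.connesExact_zero (ker_b_le_sup hn hw)
  | succ k ih =>
    exact (ih (by grind)).add_two (barExact_even hn (k + 1) (by grind)).ker_bar_le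
      (ker_b_le_sup hn hw)

theorem connesExact_of_lt (hn : 0 < n) (hw : w < (n + 1) * (k + 1)) :
    (weightPrecyclic n w).ConnesExact (2 * k) := by
  obtain ⟨d, hd⟩ : ∃ d, w ≤ 2 * (k + d) := ⟨w, by omega⟩
  induction d generalizing k with
  | zero =>
    rintro ⟨z, hz⟩ _ _
    rw [weightSpace, leadSpace_eq_bot (by omega), Submodule.mem_bot] at hz
    subst hz
    exact ⟨0, 0, by rw [map_zero, map_zero, sub_zero, add_zero]; rfl⟩
  | succ d ih =>
    exact (ih (k := k + 1) (by grind) (by omega)).of_add_two (barExact_odd hn k hw).ker_bar_le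
      (ker_b_le fun e _ => barExact_odd hn k (by omega))

/-- The projection to the chains of weight `w`. -/
def weightProj (n q w : ℕ) : Ch n q →ₗ[ℚ] Ch n q :=
  lift n q fun f => if weight q f = w then word n q f else 0

theorem weightProj_word (f : ℕ → ℕ) :
    weightProj n q w (word n q f) = if weight q f = w then word n q f else 0 := by
  refine lift_word (fun f' hf' => ?_) fun j hj hfj => ?_
  · have : weight q f' = weight q f :=
      sum_congr rfl fun j hj => by rw [hf' j (Nat.lt_succ_iff.1 (mem_range.1 hj))]
    rw [this, word_congr hf']
  · rw [word_eq_zero hj hfj, ite_self]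

theorem weightProj_mem (x : Ch n q) : weightProj n q w x ∈ weightSpace n q w := by
  have : (weightSpace n q w).mkQ ∘ₗ weightProj n q w = 0 := hom_ext fun f _ => by
    rw [LinearMap.comp_apply, weightProj_word]
    split_ifs with h
    · exact (Submodule.Quotient.mk_eq_zero _).2 (word_mem_leadSpace h (Nat.zero_le _))
    · rw [map_zero, LinearMap.zero_apply]
  exact (Submodule.Quotient.mk_eq_zero _).1 (LinearMap.congr_fun this x)

theorem weightProj_of_mem {v : ℕ} {x : Ch n q} (hx : x ∈ weightSpace n q v) :
    weightProj n q w x = if v = w then x else 0 := by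
  have : weightProj n q w x = (if v = w then LinearMap.id else 0 : Ch n q →ₗ[ℚ] Ch n q) x :=
    eq_of_eq_word (fun f _ hv _ => by rw [weightProj_word, hv]; split_ifs <;> rfl) hx
  rw [this]
  split_ifs <;> rfl

theorem weightProj_comm {q' : ℕ} {F : Ch n q →ₗ[ℚ] Ch n q'}
    (hF : ∀ v, ∀ x ∈ weightSpace n q v, F x ∈ weightSpace n q' v) (x : Ch n q) :
    weightProj n q' w (F x) = F (weightProj n q w x) := by
  refine LinearMap.congr_fun (f := weightProj n q' w ∘ₗ F) (g := F ∘ₗ weightProj n q w)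
    (hom_ext fun f _ => ?_) x
  have hf := word_mem_leadSpace (n := n) (rfl : weight q f = _) (Nat.zero_le _)
  rw [LinearMap.comp_apply, LinearMap.comp_apply, weightProj_of_mem (hF _ _ hf),
    weightProj_of_mem hf]
  split_ifs
  exacts [rfl, (map_zero F).symm]

theorem sum_weightProj (x : Ch n q) :
    ∑ w ∈ range (n * (q + 1) + 1), weightProj n q w x = x := by
  rw [← LinearMap.sum_apply]
  refine LinearMap.congr_fun (g := LinearMap.id) (hom_ext fun f hf => ?_) x
  have : weight q f ≤ (q + 1) * n := by
    simpa [weight] using sum_le_card_nsmul (range (q + 1)) (fun j => f j + 1) n fun j hj =>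
      hf j (Nat.lt_succ_iff.1 (mem_range.1 hj))
  simp only [LinearMap.sum_apply, weightProj_word, sum_ite_eq, mem_range, LinearMap.id_apply]
  exact if_pos (by grind)

theorem subsingleton_zero (q : ℕ) : Subsingleton (Ch 0 q) :=
  subsingleton_of_forall_eq 0 <| LinearMap.congr_fun (f := LinearMap.id) (g := 0) <|
    hom_ext fun _ hf => absurd (hf 0 (Nat.zero_le q)) (Nat.not_lt_zero _)

theorem connesExact (n k : ℕ) : (precyclic n).ConnesExact (2 * k) := by
  intro z x hzx
  rcases Nat.eq_zero_or_pos n with rfl | hn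
  · exact ⟨0, 0, (subsingleton_zero _).elim _ _⟩
  have exact_weight (w : ℕ) : ∃ y x', weightProj n (2 * k + 1) w z =
      (precyclic n).b (2 * k + 1) y + (x' - (precyclic n).t (2 * k + 1) x') := by
    have hM : (weightPrecyclic n w).ConnesExact (2 * k) :=
      (Nat.lt_or_ge w ((n + 1) * (k + 1))).elim (connesExact_of_lt hn) (connesExact_of_le hn)
    obtain ⟨y, x', h⟩ := hM ⟨_, weightProj_mem z⟩ ⟨_, weightProj_mem x⟩ (Subtype.ext (by
      rw [coe_weightPrecyclic_b, ← weightProj_comm fun _ _ => b_mem, hzx, map_sub,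
        weightProj_comm fun _ _ => t_mem]
      rfl))
    refine ⟨y, x', (congrArg Subtype.val h).trans ?_⟩
    rw [Submodule.coe_add, coe_weightPrecyclic_b]
    rfl
  choose y x' h using exact_weight
  refine ⟨∑ w ∈ range (n * (2 * k + 1 + 1) + 1), y w, ∑ w ∈ range (n * (2 * k + 1 + 1) + 1), x' w,
    ?_⟩
  rw [← sum_weightProj z, sum_congr rfl fun w _ => h w, map_sum, map_sum, ← sum_sub_distrib,
    ← sum_add_distrib]

theorem ccast_apply {ι : Type*} {d : ι → ℕ} (z : ∀ i, Ch n (d i)) {i j : ι} (hij : i = j)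
    (h : d i = d j) : ccast h (z i) = z j := by
  subst hij
  rfl

/-- The chain of the total complex with component `Y q` in `Ch n q`. -/
def totOfSeq (m : ℕ) (Y : ∀ q, Ch n q) : TotT n m := fun p => Y (m - p)

theorem totOfSeq_surjective (n m : ℕ) : Function.Surjective (totOfSeq (n := n) m) := by
  intro z
  refine ⟨fun q => if h : q ≤ m then ccast (Nat.sub_sub_self h) (z ⟨m - q, by omega⟩) else 0,
    funext fun p => ?_⟩
  have hp : (⟨m - (m - p), by omega⟩ : Fin (m + 1)) = p :=
    Fin.ext (Nat.sub_sub_self (Nat.lt_succ_iff.1 p.isLt))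
  exact (dif_pos (Nat.sub_le m p)).trans
    (ccast_apply (d := fun p : Fin (m + 1) => m - (p : ℕ)) z hp _)

theorem DT_totOfSeq (m : ℕ) (Y : ∀ q, Ch n q) :
    DT n m (totOfSeq (m + 1) Y) = totOfSeq m ((precyclic n).totalD m Y) := by
  funext p
  have hp : m - (m - p) = p := Nat.sub_sub_self (Nat.lt_succ_iff.1 p.isLt)
  have cast_col := ccast_apply (d := id) Y (show m + 1 - p = m - p + 1 by omega) (by simp; omega)
  have cast_row := ccast_apply (d := id) Y (show m + 1 - (p + 1) = m - p by omega) (by simp)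
  rw [totOfSeq, PrecyclicModule.totalD, PrecyclicModule.colD, PrecyclicModule.rowD, hp,
    precyclic_b, precyclic_bar, ← cast_col, ← cast_row]
  rfl

theorem exists_DT_eq (n m : ℕ) (z : TotT n (2 * m + 1)) (hz : DT n (2 * m) z = 0) :
    ∃ y, DT n (2 * m + 1) y = z := by
  obtain ⟨Z, rfl⟩ := totOfSeq_surjective n (2 * m + 1) z
  rw [DT_totOfSeq] at hz
  obtain ⟨Y, hY⟩ := (precyclic n).exists_totalD_eq (connesExact n m) Z fun q hq => by
    have : (precyclic n).totalD (2 * m) Z (2 * m - (2 * m - q)) = 0 :=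
      congrFun hz ⟨2 * m - q, by omega⟩
    rwa [Nat.sub_sub_self hq] at this
  exact ⟨totOfSeq _ Y, (DT_totOfSeq _ Y).trans (funext fun p => hY _ (Nat.sub_le ..))⟩

end Ch

end

/- The reduced cyclic homology of A = ℚ[x]/(x^{n+1}) relative to ℚ is
concentrated in even degrees: it vanishes in every odd degree (equivalently,
HC_k(A) itself vanishes in the infinitely many odd degrees k). -/
theorem reduced_cyclic_homology_truncated_polynomial_even
    (n : ℕ) : ∀ m : ℕ, Subsingleton (HCodd n m) := by
  intro m
  unfold HCodd hmlgy
  rw [Submodule.Quotient.subsingleton_iff, eq_top_iff]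
  rintro ⟨z, hz⟩ _
  exact Ch.exists_DT_eq n m z (LinearMap.mem_ker.1 hz)

end
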